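/- arXiv:2306.04230 — 3 statements merged into one kernel-verified Lean document; each statement's English description precedes it below -/
import Mathlib

section
/- Let ψ = Σ_{i=1}^M (f_i + h_i) and Ω = {x̂ ∈ S : ψ(x̂) = min_{x∈S} ψ(x)}, assumed nonempty. If ψ is strictly convex, then for each i ∈ I the sequence {w_n^{(i)}} generated by Algorithm 1 converges weakly to a point in Ω (namely, the unique minimizer of ψ over S). -/
open Filter Topology

/-!
Step sizes tend to zero, so each inner step must be controlled up to an error `o(λ)`. For small
step sizes every forward–backward step is nonexpansive, by cocoercivity of `∇h i`, and the anchored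
step contracts by the factor `1 - α n`; dividing the resulting recursion by `λ n`, a lemma of Xu
gives `x (n + 1) - x n = o(λ)`. For feasible `v`, the inequality
`‖w (i + 1) - v‖² + ‖z i - y i‖² + ‖y i - T i (y i)‖² + 2 λ (gap of i at v) ≤ ‖w i - v‖² + o(λ)`,
summed over a cycle, therefore shows that the residuals tend to zero and that the sum of the gaps is
at most `o(1)`. All the `w i`, `z i`, `y i` then have the same weak limits along any ultrafilter;
such a limit is feasible by demiclosedness, and it minimizes the objective because linearizing
`f i + h i` there bounds the gaps from below. Strict convexity makes the limit unique.
-/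

open Asymptotics
open scoped InnerProductSpace NNReal

section Sequences

theorem tendsto_prod_Ico_one_sub_zero {s : ℕ → ℝ} (hs0 : ∀ n, 0 ≤ s n) (hs1 : ∀ n, s n ≤ 1)
    (hs : ¬ Summable s) (N : ℕ) :
    Tendsto (fun n => ∏ i ∈ Finset.Ico N n, (1 - s i)) atTop (𝓝 0) := by
  have hsum : Tendsto (fun n => ∑ i ∈ Finset.Ico N n, s i) atTop atTop := by
    have htop := (not_summable_iff_tendsto_nat_atTop_of_nonneg hs0).1 hs
    refine (tendsto_atTop_add_const_right _ (-∑ i ∈ Finset.range N, s i) htop).congr' ?_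
    filter_upwards [eventually_ge_atTop N] with n hn
    rw [Finset.sum_Ico_eq_sub _ hn, sub_eq_add_neg]
  refine squeeze_zero (fun n => Finset.prod_nonneg fun i _ => sub_nonneg.2 (hs1 i)) (fun n => ?_)
    (Real.tendsto_exp_neg_atTop_nhds_zero.comp hsum)
  rw [Function.comp_apply, ← Finset.sum_neg_distrib, Real.exp_sum]
  exact Finset.prod_le_prod (fun i _ => sub_nonneg.2 (hs1 i))
    fun i _ => Real.one_sub_le_exp_neg (s i)

/-- `a ≤ b + o(s)` along the filter `F`; the calculus of one-sided estimates up to a given rate. -/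
def LEAddLittleO {ι : Type*} (F : Filter ι) (s a b : ι → ℝ) : Prop :=
  ∃ e : ι → ℝ, e =o[F] s ∧ ∀ᶠ n in F, a n ≤ b n + e n

namespace LEAddLittleO

variable {ι : Type*} {F : Filter ι} {s a b c : ι → ℝ}

theorem of_eventually_le (h : ∀ᶠ n in F, a n ≤ b n) : LEAddLittleO F s a b :=
  ⟨0, isLittleO_zero _ _, by simpa using h⟩

theorem trans (hab : LEAddLittleO F s a b) (hbc : LEAddLittleO F s b c) :
    LEAddLittleO F s a c := by
  obtain ⟨e, he, hab⟩ := hab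
  obtain ⟨e', he', hbc⟩ := hbc
  refine ⟨fun n => e n + e' n, he.add he', ?_⟩
  filter_upwards [hab, hbc] with n hab hbc
  linarith

theorem sum {κ : Type*} {I : Finset κ} {A B : κ → ι → ℝ}
    (h : ∀ i ∈ I, LEAddLittleO F s (A i) (B i)) :
    LEAddLittleO F s (fun n => ∑ i ∈ I, A i n) fun n => ∑ i ∈ I, B i n := by
  choose! e he hle using h
  refine ⟨fun n => ∑ i ∈ I, e i n, IsLittleO.fun_sum he, ?_⟩
  filter_upwards [(Finset.eventually_all I).2 hle] with n hle
  rw [← Finset.sum_add_distrib]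
  exact Finset.sum_le_sum hle

theorem mul_left (h : LEAddLittleO F s a b) (hc : ∀ n, 0 ≤ c n) :
    LEAddLittleO F (fun n => c n * s n) (fun n => c n * a n) fun n => c n * b n := by
  obtain ⟨e, he, h⟩ := h
  refine ⟨fun n => c n * e n, (isBigO_refl c F).mul_isLittleO he, ?_⟩
  filter_upwards [h] with n h
  rw [← mul_add]
  exact mul_le_mul_of_nonneg_left h (hc n)

theorem mono {t : ι → ℝ} (h : LEAddLittleO F s a b) (hst : s =O[F] t) : LEAddLittleO F t a b :=
  let ⟨e, he, hle⟩ := h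
  ⟨e, he.trans_isBigO hst, hle⟩

theorem tendsto_zero (h : LEAddLittleO F (fun _ => 1) a fun _ => 0) (ha : ∀ n, 0 ≤ a n) :
    Tendsto a F (𝓝 0) := by
  obtain ⟨e, he, hle⟩ := h
  exact squeeze_zero' (Eventually.of_forall ha) (by simpa using hle) ((isLittleO_one_iff ℝ).1 he)

theorem telescope {A D : ℕ → ι → ℝ} {m : ℕ}
    (h : ∀ i ∈ Finset.Icc 1 m, LEAddLittleO F s (fun n => A (i + 1) n + D i n) (A i)) :
    LEAddLittleO F s (fun n => A (m + 1) n + ∑ i ∈ Finset.Icc 1 m, D i n) (A 1) := by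
  obtain ⟨e, he, hle⟩ := LEAddLittleO.sum h
  refine ⟨e, he, hle.mono fun n hn => ?_⟩
  have htelescope : ∑ i ∈ Finset.Icc 1 m, (A (i + 1) n - A i n) = A (m + 1) n - A 1 n := by
    rw [← Finset.Ico_succ_right_eq_Icc, Finset.sum_Ico_sub (fun i => A i n) (by simp)]
    rfl
  rw [Finset.sum_sub_distrib] at htelescope
  simp only [Finset.sum_add_distrib] at hn
  linarith

theorem norm_sub_sq {E : Type*} [SeminormedAddCommGroup E] {x y : ι → E} (hxy : (x - y) =o[F] s)
    (hx : x =O[F] fun _ => (1 : ℝ)) (hy : y =O[F] fun _ => (1 : ℝ)) (v : E) :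
    LEAddLittleO F s (fun n => ‖x n - v‖ ^ 2) fun n => ‖y n - v‖ ^ 2 := by
  have hv := isBigO_const_const v (one_ne_zero (α := ℝ)) F
  refine ⟨_, (hxy.norm_left.mul_isBigO
    ((hx.sub hv).norm_left.add (hy.sub hv).norm_left)).congr_right fun _ => mul_one _,
    Eventually.of_forall fun n => ?_⟩
  have hdiff : ‖x n - v‖ - ‖y n - v‖ ≤ ‖x n - y n‖ := by
    simpa using norm_sub_norm_le (x n - v) (y n - v)
  rw [Pi.sub_apply, ← sub_le_iff_le_add', sq_sub_sq, mul_comm]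
  gcongr

end LEAddLittleO

theorem tendsto_zero_of_le_one_sub_mul {a s : ℕ → ℝ} (ha : ∀ n, 0 ≤ a n)
    (hs0 : ∀ n, 0 ≤ s n) (hs1 : ∀ n, s n ≤ 1) (hs : ¬ Summable s)
    (h : LEAddLittleO atTop s (fun n => a (n + 1)) fun n => (1 - s n) * a n) :
    Tendsto a atTop (𝓝 0) := by
  obtain ⟨e, he, h⟩ := h
  refine tendsto_order.2 ⟨fun ε hε => Eventually.of_forall fun n => hε.trans_le (ha n),
    fun ε hε => ?_⟩
  obtain ⟨N, hN⟩ := eventually_atTop.1 (h.and (he.bound (half_pos hε)))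
  have hcontract : ∀ n ≥ N, a (n + 1) - ε / 2 ≤ (1 - s n) * (a n - ε / 2) + 0 := fun n hn => by
    obtain ⟨hrec, hsmall⟩ := hN n hn
    rw [Real.norm_eq_abs, Real.norm_of_nonneg (hs0 n)] at hsmall
    linarith [le_abs_self (e n)]
  have hlim := (tendsto_prod_Ico_one_sub_zero hs0 hs1 hs N).const_mul (a N - ε / 2)
  rw [mul_zero] at hlim
  filter_upwards [hlim.eventually_lt_const (half_pos hε), eventually_ge_atTop N] with n hlt hn
  have hprod := discrete_gronwall_prod_general (u := fun n => a n - ε / 2) (c := fun n => 1 - s n)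
    (b := fun _ => 0) hcontract (fun n _ => sub_nonneg.2 (hs1 n)) hn
  simp only [zero_mul, Finset.sum_const_zero, add_zero] at hprod
  linarith

theorem isBigO_one_of_le_add_mul {r b c : ℕ → ℝ} (hr : ∀ n, 0 ≤ r n)
    (hc : c =O[atTop] fun _ => (1 : ℝ)) (hb : Tendsto b atTop (𝓝 0))
    (h : ∀ᶠ n in atTop, r (n + 1) ≤ c n + b n * r n) : r =O[atTop] fun _ => (1 : ℝ) := by
  obtain ⟨C, hC⟩ := hc.bound
  obtain ⟨N, hN⟩ := eventually_atTop.1 (h.and (hC.and (hb.eventually_le_const one_half_pos)))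
  refine IsBigO.of_bound (max (r N) (2 * C)) (eventually_atTop.2 ⟨N, fun n hn => ?_⟩)
  rw [Real.norm_of_nonneg (hr n), norm_one, mul_one]
  induction n, hn using Nat.le_induction with
  | base => exact le_max_left _ _
  | succ n hn ih =>
    obtain ⟨hrec, hcn, hbn⟩ := hN n hn
    rw [norm_one, mul_one] at hcn
    calc r (n + 1) ≤ c n + b n * r n := hrec
      _ ≤ C + 1 / 2 * max (r N) (2 * C) := by
        gcongr
        exacts [(le_abs_self _).trans hcn, hr n]
      _ ≤ max (r N) (2 * C) := by linarith [le_max_right (r N) (2 * C)]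

theorem isBigO_one_comp_of_lipschitzWith {ι E F : Type*} [SeminormedAddCommGroup E]
    [SeminormedAddCommGroup F] {l : Filter ι} {K : ℝ≥0} {g : E → F} (hg : LipschitzWith K g)
    {x : ι → E} (hx : x =O[l] fun _ => (1 : ℝ)) : (fun n => g (x n)) =O[l] fun _ => (1 : ℝ) := by
  have hsub : (fun n => g (x n) - g 0) =O[l] fun _ => (1 : ℝ) :=
    (IsBigO.of_bound K (Eventually.of_forall fun n => by
      simpa using hg.norm_sub_le (x n) 0)).trans hx
  simpa using hsub.add (isBigO_const_const (g 0) one_ne_zero l)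

end Sequences

section InnerAsymptotics

variable {ι H : Type*} [NormedAddCommGroup H] [InnerProductSpace ℝ H] {F : Filter ι}

theorem isBigO_inner_one {x y : ι → H} (hx : x =O[F] fun _ => (1 : ℝ))
    (hy : y =O[F] fun _ => (1 : ℝ)) : (fun n => ⟪x n, y n⟫_ℝ) =O[F] fun _ => (1 : ℝ) := by
  simpa only [mul_one] using
    (IsBigO.of_norm_le fun n => abs_real_inner_le_norm (x n) (y n)).trans
      (hx.norm_left.mul hy.norm_left)

theorem tendsto_inner_zero {x y : ι → H} (hx : x =O[F] fun _ => (1 : ℝ))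
    (hy : Tendsto y F (𝓝 0)) : Tendsto (fun n => ⟪x n, y n⟫_ℝ) F (𝓝 0) := by
  have hmul := hx.norm_left.mul_isLittleO ((isLittleO_one_iff ℝ).2 hy).norm_left
  exact (isLittleO_one_iff ℝ).1 <| by simpa only [mul_one] using
    (IsBigO.of_norm_le fun n => abs_real_inner_le_norm (x n) (y n)).trans_isLittleO hmul

/-- Weak convergence of `x` to `p` along `F`, through the Riesz identification of `H` with its
dual. -/
def WeakTendsto (x : ι → H) (F : Filter ι) (p : H) : Prop :=
  ∀ q : H, Tendsto (fun n => ⟪x n, q⟫_ℝ) F (𝓝 ⟪p, q⟫_ℝ)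

theorem WeakTendsto.of_sub_tendsto_zero {x y : ι → H} {p : H} (hx : WeakTendsto x F p)
    (hxy : Tendsto (fun n => x n - y n) F (𝓝 0)) : WeakTendsto y F p := fun q => by
  simpa [inner_sub_left] using (hx q).sub (hxy.inner (tendsto_const_nhds (x := q)))

theorem WeakTendsto.tendsto_inner_sub {x : ι → H} {p : H} (hx : WeakTendsto x F p) (c : H) :
    Tendsto (fun n => ⟪c, x n - p⟫_ℝ) F (𝓝 0) := by
  simpa [inner_sub_right, real_inner_comm] using (hx c).sub_const ⟪p, c⟫_ℝ

theorem exists_weakTendsto_ultrafilter [CompleteSpace H] (U : Ultrafilter ι) {x : ι → H}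
    (hx : x =O[(U : Filter ι)] fun _ => (1 : ℝ)) : ∃ p, WeakTendsto x U p := by
  obtain ⟨C, hC⟩ := hx.bound
  let φ : ι → WeakDual ℝ H :=
    fun n => StrongDual.toWeakDual (InnerProductSpace.toDual ℝ H (x n))
  obtain ⟨ℓ, -, hℓ⟩ := (WeakDual.isCompact_closedBall (𝕜 := ℝ) (E := H) 0 C).ultrafilter_le_nhds'
    (U.map φ) (Ultrafilter.mem_map.2 <| hC.mono fun n hn => by simpa [φ] using hn)
  refine ⟨(InnerProductSpace.toDual ℝ H).symm (WeakDual.toStrongDual ℓ), fun q => ?_⟩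
  rw [InnerProductSpace.toDual_symm_apply]
  exact ((WeakDual.eval_continuous (𝕜 := ℝ) q).tendsto ℓ).comp hℓ

end InnerAsymptotics

section FirmlyNonexpansive

variable {H : Type*} [NormedAddCommGroup H] [InnerProductSpace ℝ H] {T : H → H}

/-- Firm nonexpansiveness of `T`, in the inner product form. -/
def FirmlyNonexpansive (T : H → H) : Prop :=
  ∀ x y, ‖T x - T y‖ ^ 2 ≤ ⟪T x - T y, x - y⟫_ℝ

namespace FirmlyNonexpansive

theorem inner_sub_nonneg (hT : FirmlyNonexpansive T) (x y : H) :
    0 ≤ ⟪T x - T y, (x - T x) - (y - T y)⟫_ℝ := by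
  have h := hT x y
  rw [← real_inner_self_eq_norm_sq, ← sub_nonneg, ← inner_sub_right] at h
  convert h using 2
  abel

theorem norm_sub_le (hT : FirmlyNonexpansive T) (x y : H) : ‖T x - T y‖ ≤ ‖x - y‖ := by
  by_contra! hlt
  have h := (hT x y).trans (real_inner_le_norm _ _)
  nlinarith [norm_nonneg (x - y)]

theorem lipschitzWith (hT : FirmlyNonexpansive T) : LipschitzWith 1 T :=
  LipschitzWith.mk_one fun x y => by simpa only [dist_eq_norm] using hT.norm_sub_le x y

theorem norm_sub_sq_add_le (hT : FirmlyNonexpansive T) {p : H} (hp : T p = p) (y : H) :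
    ‖T y - p‖ ^ 2 + ‖y - T y‖ ^ 2 ≤ ‖y - p‖ ^ 2 := by
  have h := hT y p
  rw [hp] at h
  have hexpand := norm_sub_sq_real (y - p) (T y - p)
  rw [sub_sub_sub_cancel_right, real_inner_comm] at hexpand
  linarith

end FirmlyNonexpansive

theorem eq_of_inner_sub_nonneg {x y : H} (h : 0 ≤ ⟪x - y, y - x⟫_ℝ) : x = y := by
  rw [← neg_sub x y, inner_neg_right, neg_nonneg] at h
  exact sub_eq_zero.1 (real_inner_self_nonpos.1 h)

namespace FirmlyNonexpansive

theorem convex_fixedPoints (hT : FirmlyNonexpansive T) : Convex ℝ {x | T x = x} := by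
  intro p (hp : T p = p) q (hq : T q = q) a b ha hb hab
  set m := a • p + b • q with hm
  have hmp := hT.inner_sub_nonneg m p
  have hmq := hT.inner_sub_nonneg m q
  rw [hp, sub_self, sub_zero] at hmp
  rw [hq, sub_self, sub_zero] at hmq
  refine eq_of_inner_sub_nonneg ?_
  have hcomb : T m - m = a • (T m - p) + b • (T m - q) := by
    obtain rfl := eq_sub_iff_add_eq'.2 hab
    module
  rw [hcomb, inner_add_left, real_inner_smul_left, real_inner_smul_left]
  positivity

theorem eq_of_weakTendsto (hT : FirmlyNonexpansive T) {ι : Type*} {F : Filter ι} [F.NeBot]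
    {y : ι → H} {p : H} (hbdd : y =O[F] fun _ => (1 : ℝ)) (hy : WeakTendsto y F p)
    (hyT : Tendsto (fun n => y n - T (y n)) F (𝓝 0)) : T p = p := by
  have hTy : WeakTendsto (fun n => T (y n)) F p := hy.of_sub_tendsto_zero hyT
  have hTy_bdd : (fun n => T (y n)) =O[F] fun _ => (1 : ℝ) := by
    simpa using hbdd.sub (hyT.isBigO_one ℝ)
  have hleft : Tendsto (fun n => ⟪T p - T (y n), p - T p⟫_ℝ) F (𝓝 ⟪T p - p, p - T p⟫_ℝ) := by
    simpa only [inner_sub_left] using (hTy (p - T p)).const_sub ⟪T p, p - T p⟫_ℝ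
  have hright : Tendsto (fun n => ⟪T p - T (y n), y n - T (y n)⟫_ℝ) F (𝓝 0) :=
    tendsto_inner_zero ((isBigO_const_const (T p) one_ne_zero F).sub hTy_bdd) hyT
  refine eq_of_inner_sub_nonneg (ge_of_tendsto (by simpa using hleft.sub hright)
    (Eventually.of_forall fun n => ?_))
  rw [← inner_sub_right]
  exact hT.inner_sub_nonneg p (y n)

end FirmlyNonexpansive

end FirmlyNonexpansive

section GradientInequalities

variable {H : Type*} [NormedAddCommGroup H] [InnerProductSpace ℝ H] [CompleteSpace H]
  {s : Set H} {h : H → ℝ} {g : H → H}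

theorem hasDerivAt_comp_lineMap {x v g : H} {t : ℝ}
    (hg : HasGradientAt h g (AffineMap.lineMap x v t)) :
    HasDerivAt (h ∘ AffineMap.lineMap (k := ℝ) x v) ⟪g, v - x⟫_ℝ t := by
  simpa using hg.hasFDerivAt.comp_hasDerivAt t AffineMap.hasDerivAt_lineMap

theorem add_inner_le_of_convexOn {x v g : H} (hconv : ConvexOn ℝ s h) (hx : x ∈ s) (hv : v ∈ s)
    (hg : HasGradientAt h g x) : h x + ⟪g, v - x⟫_ℝ ≤ h v := by
  have hderiv : HasDerivAt (h ∘ AffineMap.lineMap (k := ℝ) x v) ⟪g, v - x⟫_ℝ 0 :=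
    hasDerivAt_comp_lineMap (by simpa using hg)
  have hslope := (hconv.comp_affineMap (AffineMap.lineMap x v)).le_slope_of_hasDerivAt
    (x := 0) (y := 1) (by simpa using hx) (by simpa using hv) one_pos hderiv
  simp only [slope_def_field, Function.comp_apply, AffineMap.lineMap_apply_one,
    AffineMap.lineMap_apply_zero, sub_zero, div_one] at hslope
  linarith

theorem le_add_inner_add_of_lipschitzWith {K : ℝ≥0} (hg : ∀ x, HasGradientAt h (g x) x)
    (hlip : LipschitzWith K g) (x v : H) :
    h v ≤ h x + ⟪g x, v - x⟫_ℝ + K / 2 * ‖v - x‖ ^ 2 := by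
  let line : ℝ → H := AffineMap.lineMap x v
  let bound : ℝ → ℝ := fun t => h x + t * ⟪g x, v - x⟫_ℝ + t ^ 2 * (K / 2 * ‖v - x‖ ^ 2)
  have hline (t : ℝ) : HasDerivAt (h ∘ line) ⟪g (line t), v - x⟫_ℝ t :=
    hasDerivAt_comp_lineMap (hg _)
  have hbound (t : ℝ) :
      HasDerivAt bound (⟪g x, v - x⟫_ℝ + 2 * t * (K / 2 * ‖v - x‖ ^ 2)) t := by
    refine ((((hasDerivAt_id t).mul_const _).const_add _).add
      ((hasDerivAt_pow 2 t).mul_const _)).congr_deriv ?_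
    simp
  have hderiv_le (t : ℝ) (ht : 0 ≤ t) :
      ⟪g (line t), v - x⟫_ℝ ≤ ⟪g x, v - x⟫_ℝ + 2 * t * (K / 2 * ‖v - x‖ ^ 2) := by
    have hnorm : ‖g (line t) - g x‖ ≤ K * (t * ‖v - x‖) := by
      simpa [line, AffineMap.lineMap_apply, norm_smul, abs_of_nonneg ht]
        using hlip.norm_sub_le (line t) x
    have hcs := (real_inner_le_norm (g (line t) - g x) (v - x)).trans
      (mul_le_mul_of_nonneg_right hnorm (norm_nonneg _))
    rw [inner_sub_left] at hcs
    linarith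
  simpa [bound, line] using image_le_of_deriv_right_le_deriv_boundary (f := h ∘ line) (B := bound)
    (fun t _ => (hline t).continuousAt.continuousWithinAt)
    (fun t _ => (hline t).hasDerivWithinAt) (by simp [line, bound])
    (fun t _ => (hbound t).continuousAt.continuousWithinAt)
    (fun t _ => (hbound t).hasDerivWithinAt) (fun t ht => hderiv_le t ht.1)
    (Set.right_mem_Icc.2 zero_le_one)

theorem norm_gradient_sub_sq_le_bregman {K : ℝ≥0} (hconv : ConvexOn ℝ Set.univ h)
    (hg : ∀ x, HasGradientAt h (g x) x) (hlip : LipschitzWith K g) (x y : H) :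
    ‖g x - g y‖ ^ 2 ≤ 2 * K * (h x - h y - ⟪g y, x - y⟫_ℝ) := by
  -- A descent step of length `t` from `x`, for the function `h - ⟪g y, ·⟫` minimal at `y`.
  have hstep (t : ℝ) :
      (t - K / 2 * t ^ 2) * ‖g x - g y‖ ^ 2 ≤ h x - h y - ⟪g y, x - y⟫_ℝ := by
    have hlower := add_inner_le_of_convexOn hconv (Set.mem_univ y)
      (Set.mem_univ (x - t • (g x - g y))) (hg y)
    have hupper := le_add_inner_add_of_lipschitzWith hg hlip x (x - t • (g x - g y))
    rw [sub_right_comm, inner_sub_right, real_inner_smul_right] at hlower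
    rw [sub_sub_cancel_left, norm_neg, norm_smul, inner_neg_right, real_inner_smul_right, mul_pow,
      Real.norm_eq_abs, sq_abs] at hupper
    have hsq : ⟪g x, g x - g y⟫_ℝ - ⟪g y, g x - g y⟫_ℝ = ‖g x - g y‖ ^ 2 := by
      rw [← inner_sub_left, real_inner_self_eq_norm_sq]
    linear_combination hlower + hupper - t * hsq
  rcases eq_or_ne K 0 with rfl | hK
  · have hconst : g x - g y = 0 := by simpa using hlip.norm_sub_le x y
    simp [hconst]
  · calc ‖g x - g y‖ ^ 2
        = 2 * K * (((K : ℝ)⁻¹ - K / 2 * (K : ℝ)⁻¹ ^ 2) * ‖g x - g y‖ ^ 2) := by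
          field_simp
          norm_num
      _ ≤ 2 * K * (h x - h y - ⟪g y, x - y⟫_ℝ) := by
          gcongr
          exact hstep _

theorem norm_gradient_sub_sq_le_inner {K : ℝ≥0} (hconv : ConvexOn ℝ Set.univ h)
    (hg : ∀ x, HasGradientAt h (g x) x) (hlip : LipschitzWith K g) (x y : H) :
    ‖g x - g y‖ ^ 2 ≤ K * ⟪g x - g y, x - y⟫_ℝ := by
  have hxy := norm_gradient_sub_sq_le_bregman hconv hg hlip x y
  have hyx := norm_gradient_sub_sq_le_bregman hconv hg hlip y x
  rw [norm_sub_rev, ← neg_sub x y, inner_neg_right] at hyx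
  rw [inner_sub_left]
  linarith

theorem norm_sub_sub_smul_gradient_le {K : ℝ≥0} (hconv : ConvexOn ℝ Set.univ h)
    (hg : ∀ x, HasGradientAt h (g x) x) (hlip : LipschitzWith K g) {l : ℝ} (hl : 0 ≤ l)
    (hlK : l * K ≤ 2) (x y : H) : ‖x - y - l • (g x - g y)‖ ≤ ‖x - y‖ := by
  have hcoco := norm_gradient_sub_sq_le_inner hconv hg hlip x y
  have hnonneg : 0 ≤ ⟪g x - g y, x - y⟫_ℝ := by
    have hxy := add_inner_le_of_convexOn hconv (Set.mem_univ x) (Set.mem_univ y) (hg x)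
    have hyx := add_inner_le_of_convexOn hconv (Set.mem_univ y) (Set.mem_univ x) (hg y)
    rw [← neg_sub x y, inner_neg_right] at hxy
    rw [inner_sub_left]
    linarith
  refine le_of_sq_le_sq ?_ (norm_nonneg _)
  rw [norm_sub_sq_real, norm_smul, mul_pow, Real.norm_eq_abs, sq_abs, real_inner_smul_right,
    real_inner_comm]
  have hquad : l ^ 2 * ‖g x - g y‖ ^ 2 ≤ l * 2 * ⟪g x - g y, x - y⟫_ℝ := by
    calc l ^ 2 * ‖g x - g y‖ ^ 2 ≤ l ^ 2 * (K * ⟪g x - g y, x - y⟫_ℝ) := by gcongr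
      _ = l * (l * K) * ⟪g x - g y, x - y⟫_ℝ := by ring
      _ ≤ l * 2 * ⟪g x - g y, x - y⟫_ℝ := by gcongr
  linarith

theorem exists_inner_minorant {f : H → ℝ} (hf : ConvexOn ℝ Set.univ f)
    (hlsc : LowerSemicontinuous f) (p : H) {ε : ℝ} (hε : 0 < ε) :
    ∃ c : H, ∀ v, f p - ε + ⟪c, v - p⟫_ℝ ≤ f v := by
  obtain ⟨l, b, hle, hlt⟩ := hf.exists_affine_le_of_lt (𝕜 := ℝ) (Set.mem_univ p)
    (sub_lt_self (f p) hε) isClosed_univ (hlsc.lowerSemicontinuousOn _)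
  simp only [RCLike.re_to_real] at hlt
  refine ⟨(InnerProductSpace.toDual ℝ H).symm l, fun v => ?_⟩
  have hv : l v + b ≤ f v := by simpa using hle ⟨v, Set.mem_univ v⟩
  rw [InnerProductSpace.toDual_symm_apply, map_sub]
  linarith

/-- When `y` and `z` tend weakly to `p` and `y - z` tends to zero, the inner products on the left
vanish; `ε` lets separation replace a subgradient of `f` at `p`. -/
theorem exists_composite_lower_bound {f : H → ℝ} (hf : ConvexOn ℝ Set.univ f)
    (hlsc : LowerSemicontinuous f) (hconv : ConvexOn ℝ Set.univ h)
    (hg : ∀ x, HasGradientAt h (g x) x) (p : H) {ε : ℝ} (hε : 0 < ε) :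
    ∃ c : H, ∀ v z y : H,
      f p + h p - (f v + h v) - ε + (⟪c, y - p⟫_ℝ + ⟪g p, z - p⟫_ℝ + ⟪g z, y - z⟫_ℝ) ≤
        f y - f v + ⟪g z, y - v⟫_ℝ := by
  obtain ⟨c, hc⟩ := exists_inner_minorant hf hlsc p hε
  refine ⟨c, fun v z y => ?_⟩
  have hpz := add_inner_le_of_convexOn hconv (Set.mem_univ p) (Set.mem_univ z) (hg p)
  have hzv := add_inner_le_of_convexOn hconv (Set.mem_univ z) (Set.mem_univ v) (hg z)
  have hsplit : ⟪g z, y - v⟫_ℝ = ⟪g z, y - z⟫_ℝ - ⟪g z, v - z⟫_ℝ := by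
    rw [← inner_sub_right, sub_sub_sub_cancel_right]
  linarith [hc y]

end GradientInequalities

section ProximalPoints

variable {H : Type*} [NormedAddCommGroup H] [InnerProductSpace ℝ H] {f : H → ℝ}

/-- `y` minimizes `v ↦ f v + ‖a - v‖² / (2 * l)`, that is, `y = prox_{l f} a`; stated as a relation
so that existence of a minimizer need not be established. -/
def IsProx (f : H → ℝ) (l : ℝ) (a y : H) : Prop :=
  ∀ v, f y + (1 / (2 * l)) * ‖a - y‖ ^ 2 ≤ f v + (1 / (2 * l)) * ‖a - v‖ ^ 2

namespace IsProx

theorem inner_le {l : ℝ} {a y : H} (hy : IsProx f l a y) (hf : ConvexOn ℝ Set.univ f) (hl : 0 < l)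
    (v : H) : ⟪a - y, v - y⟫_ℝ ≤ l * (f v - f y) := by
  have hsegment (t : ℝ) (ht : t ∈ Set.Ioc (0 : ℝ) 1) :
      ⟪a - y, v - y⟫_ℝ ≤ l * (f v - f y) + t * (‖v - y‖ ^ 2 / 2) := by
    have hmin := hy ((1 - t) • y + t • v)
    have hconv := hf.2 (Set.mem_univ y) (Set.mem_univ v) (sub_nonneg.2 ht.2) ht.1.le
      (sub_add_cancel 1 t)
    have hpoint : a - ((1 - t) • y + t • v) = a - y - t • (v - y) := by module
    rw [hpoint, norm_sub_sq_real (a - y), norm_smul, real_inner_smul_right, Real.norm_eq_abs,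
      mul_pow, sq_abs] at hmin
    simp only [smul_eq_mul] at hconv
    have hscaled : t * (l * (f y - f v)) ≤
        t * (-⟪a - y, v - y⟫_ℝ + t * (‖v - y‖ ^ 2 / 2)) := by
      calc t * (l * (f y - f v)) = l * (t * (f y - f v)) := by ring
        _ ≤ l * (1 / (2 * l) * (-(2 * (t * ⟪a - y, v - y⟫_ℝ)) + t ^ 2 * ‖v - y‖ ^ 2)) :=
          mul_le_mul_of_nonneg_left (by linarith) hl.le
        _ = t * (-⟪a - y, v - y⟫_ℝ + t * (‖v - y‖ ^ 2 / 2)) := by field_simp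
    linarith [le_of_mul_le_mul_left hscaled ht.1]
  have hlim : Tendsto (fun t : ℝ => l * (f v - f y) + t * (‖v - y‖ ^ 2 / 2)) (𝓝[>] 0)
      (𝓝 (l * (f v - f y))) := by
    refine Tendsto.mono_left ?_ nhdsWithin_le_nhds
    simpa using ((tendsto_id (x := 𝓝 (0 : ℝ))).mul_const (‖v - y‖ ^ 2 / 2)).const_add
      (l * (f v - f y))
  exact ge_of_tendsto hlim (eventually_of_mem (Ioc_mem_nhdsGT one_pos) hsegment)

theorem norm_sub_le {l₀ l₁ : ℝ} {a₀ a₁ y₀ y₁ : H} (h₀ : IsProx f l₀ a₀ y₀) (h₁ : IsProx f l₁ a₁ y₁)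
    (hf : ConvexOn ℝ Set.univ f) (hl₀ : 0 < l₀) (hl₁ : 0 < l₁) :
    ‖y₁ - y₀‖ ≤ ‖a₁ - a₀‖ + |1 - l₁ / l₀| * ‖a₀ - y₀‖ := by
  have hvi₀ : l₁ / l₀ * ⟪a₀ - y₀, y₁ - y₀⟫_ℝ ≤ l₁ * (f y₁ - f y₀) := by
    have hscaled := mul_le_mul_of_nonneg_left (h₀.inner_le hf hl₀ y₁) (div_pos hl₁ hl₀).le
    rwa [← mul_assoc, div_mul_cancel₀ _ hl₀.ne'] at hscaled
  have hvi₁ := h₁.inner_le hf hl₁ y₀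
  have hsq : ‖y₁ - y₀‖ ^ 2 ≤ ⟪a₁ - a₀ + (1 - l₁ / l₀) • (a₀ - y₀), y₁ - y₀⟫_ℝ := by
    have hsplit : a₁ - a₀ + (1 - l₁ / l₀) • (a₀ - y₀) =
        y₁ - y₀ + (a₁ - y₁) - (l₁ / l₀) • (a₀ - y₀) := by module
    rw [hsplit, inner_sub_left, inner_add_left, real_inner_self_eq_norm_sq, real_inner_smul_left]
    rw [← neg_sub y₁ y₀, inner_neg_right] at hvi₁
    linarith
  have hnorm : ‖y₁ - y₀‖ ≤ ‖a₁ - a₀ + (1 - l₁ / l₀) • (a₀ - y₀)‖ := by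
    by_contra! hlt
    have hcs := hsq.trans (real_inner_le_norm _ _)
    nlinarith [norm_nonneg (a₁ - a₀ + (1 - l₁ / l₀) • (a₀ - y₀))]
  refine hnorm.trans ((norm_add_le _ _).trans_eq ?_)
  rw [norm_smul, Real.norm_eq_abs]

theorem norm_sub_sq_add_le {l : ℝ} {z d y : H} (hy : IsProx f l (z + l • d) y)
    (hf : ConvexOn ℝ Set.univ f) (hl : 0 < l) (v : H) :
    ‖y - v‖ ^ 2 + ‖z - y‖ ^ 2 ≤ ‖z - v‖ ^ 2 + 2 * l * (f v - f y + ⟪d, y - v⟫_ℝ) := by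
  have hvi := hy.inner_le hf hl v
  have hexpand := norm_sub_sq_real (z - y) (v - y)
  rw [sub_sub_sub_cancel_right, norm_sub_rev v y] at hexpand
  rw [add_sub_right_comm, inner_add_left, real_inner_smul_left, ← neg_sub y v, inner_neg_right d,
    neg_sub y v] at hvi
  linarith

end IsProx

end ProximalPoints

section StepEstimates

variable {H : Type*} [NormedAddCommGroup H] [InnerProductSpace ℝ H]

theorem norm_halpern_sub_le {a₀ a₁ : ℝ} (ha₁ : a₁ ≤ 1) (u x₀ x₁ : H) :
    ‖(a₁ • u + (1 - a₁) • x₁) - (a₀ • u + (1 - a₀) • x₀)‖ ≤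
      (1 - a₁) * ‖x₁ - x₀‖ + |a₀ - a₁| * ‖u - x₀‖ := by
  have hsplit : (a₁ • u + (1 - a₁) • x₁) - (a₀ • u + (1 - a₀) • x₀) =
      (1 - a₁) • (x₁ - x₀) - (a₀ - a₁) • (u - x₀) := by module
  rw [hsplit]
  refine (norm_sub_le _ _).trans_eq ?_
  rw [norm_smul, norm_smul, Real.norm_of_nonneg (sub_nonneg.2 ha₁), Real.norm_eq_abs]

theorem norm_halpern_sub_sq_le {a : ℝ} (ha₀ : 0 ≤ a) (ha₁ : a ≤ 1) (u x v : H) :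
    ‖a • u + (1 - a) • x - v‖ ^ 2 ≤ a * ‖u - v‖ ^ 2 + ‖x - v‖ ^ 2 := by
  have hconv := (convexOn_univ_norm (E := H)).pow (fun _ _ => norm_nonneg _) 2
  have hsplit : a • u + (1 - a) • x - v = a • (u - v) + (1 - a) • (x - v) := by module
  calc ‖a • u + (1 - a) • x - v‖ ^ 2 = ‖a • (u - v) + (1 - a) • (x - v)‖ ^ 2 := by rw [hsplit]
    _ ≤ a * ‖u - v‖ ^ 2 + (1 - a) * ‖x - v‖ ^ 2 :=
      hconv.2 (Set.mem_univ _) (Set.mem_univ _) ha₀ (sub_nonneg.2 ha₁) (add_sub_cancel a 1)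
    _ ≤ a * ‖u - v‖ ^ 2 + ‖x - v‖ ^ 2 := by
      gcongr
      exact mul_le_of_le_one_left (sq_nonneg _) (sub_le_self _ ha₀)

theorem norm_inertial_sub_le (t₀ t₁ : ℝ) (x y z : H) :
    ‖(x + t₁ • (x - y)) - (y + t₀ • (y - z))‖ ≤
      ‖x - y‖ + (|t₁| * ‖x - y‖ + |t₀| * ‖y - z‖) := by
  have hsplit : (x + t₁ • (x - y)) - (y + t₀ • (y - z)) =
      x - y + (t₁ • (x - y) - t₀ • (y - z)) := by module
  rw [hsplit, ← Real.norm_eq_abs, ← Real.norm_eq_abs, ← norm_smul, ← norm_smul]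
  exact (norm_add_le _ _).trans (by gcongr; exact norm_sub_le _ _)

theorem norm_forward_step_sub_le {l₀ l₁ b₀ b₁ : ℝ} {z₀ z₁ g₀ g₁ d₀ d₁ : H}
    (hg : ‖z₁ - z₀ - l₁ • (g₁ - g₀)‖ ≤ ‖z₁ - z₀‖) :
    ‖(z₁ + l₁ • (-g₁ + b₁ • d₁)) - (z₀ + l₀ • (-g₀ + b₀ • d₀))‖ ≤
      ‖z₁ - z₀‖ + (|l₀ - l₁| * ‖g₀‖ + |l₁ * b₁| * ‖d₁‖ + |l₀ * b₀| * ‖d₀‖) := by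
  have hsplit : (z₁ + l₁ • (-g₁ + b₁ • d₁)) - (z₀ + l₀ • (-g₀ + b₀ • d₀)) =
      (z₁ - z₀ - l₁ • (g₁ - g₀)) + ((l₀ - l₁) • g₀ + (l₁ * b₁) • d₁ - (l₀ * b₀) • d₀) := by
    module
  rw [hsplit]
  simp only [← Real.norm_eq_abs, ← norm_smul]
  exact (norm_add_le _ _).trans
    (add_le_add hg ((norm_sub_le _ _).trans (by gcongr; exact norm_add_le _ _)))

end StepEstimates

/-- The parameters of the algorithm, `lam` being `λ`, with the quantitative conditions relating
them. The quotients in the conditions have positive denominators. -/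
structure StepSizes where
  (θ lam β α : ℕ → ℝ)
  lam_pos : ∀ n, 0 < lam n
  α_pos : ∀ n, 0 < α n
  α_le_one : ∀ n, α n ≤ 1
  lam_tendsto : Tendsto lam atTop (𝓝 0)
  α_not_summable : ¬ Summable α
  lam_inv_sub : Tendsto (fun n => (1 / α (n + 1)) * |1 / lam (n + 1) - 1 / lam n|) atTop (𝓝 0)
  α_ratio : Tendsto (fun n => (1 / lam (n + 1)) * |1 - α n / α (n + 1)|) atTop (𝓝 0)
  α_div_lam : Tendsto (fun n => α n / lam n) atTop (𝓝 0)
  θ_div : Tendsto (fun n => θ n / (α (n + 1) * lam (n + 1))) atTop (𝓝 0)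
  β_div : Tendsto (fun n => β n / α (n + 1)) atTop (𝓝 0)

namespace StepSizes

variable (s : StepSizes)

/-- The order of magnitude below which errors are negligible in comparing the increments
`w (n + 1) i - w n i` of consecutive steps. -/
def rate (n : ℕ) : ℝ :=
  s.α (n + 1) * s.lam (n + 1)

theorem isLittleO_lam_one : s.lam =o[atTop] fun _ => (1 : ℝ) :=
  (isLittleO_one_iff ℝ).2 s.lam_tendsto

theorem isBigO_lam_one : s.lam =O[atTop] fun _ => (1 : ℝ) :=
  s.isLittleO_lam_one.isBigO

theorem isBigO_α_one : s.α =O[atTop] fun _ => (1 : ℝ) :=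
  IsBigO.of_bound' (Eventually.of_forall fun n => by
    simpa [abs_of_pos (s.α_pos n)] using s.α_le_one n)

theorem isBigO_rate_lam_succ : s.rate =O[atTop] fun n => s.lam (n + 1) :=
  ((s.isBigO_α_one.comp_tendsto (tendsto_add_atTop_nat 1)).mul
    (isBigO_refl (fun n => s.lam (n + 1)) atTop)).congr_right fun _ => one_mul _

theorem isBigO_rate_α_succ : s.rate =O[atTop] fun n => s.α (n + 1) :=
  ((isBigO_refl (fun n => s.α (n + 1)) atTop).mul
    (s.isBigO_lam_one.comp_tendsto (tendsto_add_atTop_nat 1))).congr_right fun _ => mul_one _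

theorem isBigO_one_sub_α_mul_rate :
    (fun n => (1 - s.α (n + 1)) * s.rate n) =O[atTop] s.rate :=
  ((((isBigO_refl _ _).sub s.isBigO_α_one).comp_tendsto (tendsto_add_atTop_nat 1)).mul
    (isBigO_refl s.rate atTop)).congr_right fun _ => one_mul _

theorem isLittleO_inv_lam_sub :
    (fun n => 1 / s.lam (n + 1) - 1 / s.lam n) =o[atTop] fun n => s.α (n + 1) := by
  refine isLittleO_norm_left.1 (isLittleO_of_tendsto (fun n hn => ?_) ?_)
  · exact absurd hn (s.α_pos _).ne'
  · exact s.lam_inv_sub.congr fun n => one_div_mul_eq_div _ _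

theorem isLittleO_one_sub_lam_ratio :
    (fun n => 1 - s.lam (n + 1) / s.lam n) =o[atTop] s.rate := by
  refine (s.isLittleO_inv_lam_sub.mul_isBigO
    (isBigO_refl (fun n => s.lam (n + 1)) atTop)).congr_left fun n => ?_
  field_simp [(s.lam_pos n).ne', (s.lam_pos (n + 1)).ne']

theorem isLittleO_lam_sub : (fun n => s.lam n - s.lam (n + 1)) =o[atTop] s.rate := by
  refine ((s.isBigO_lam_one.mul_isLittleO s.isLittleO_one_sub_lam_ratio).congr_left fun n => ?_
    ).congr_right fun n => one_mul _
  field_simp [(s.lam_pos n).ne']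

theorem isLittleO_α_sub : (fun n => s.α n - s.α (n + 1)) =o[atTop] s.rate := by
  have hratio : (fun n => 1 - s.α n / s.α (n + 1)) =o[atTop] fun n => s.lam (n + 1) := by
    refine isLittleO_norm_left.1 (isLittleO_of_tendsto (fun n hn => ?_) ?_)
    · exact absurd hn (s.lam_pos _).ne'
    · exact s.α_ratio.congr fun n => one_div_mul_eq_div _ _
  refine ((isBigO_refl (fun n => s.α (n + 1)) atTop).neg_left.mul_isLittleO hratio).congr_left
    fun n => ?_
  field_simp [(s.α_pos (n + 1)).ne']
  ring

theorem isEquivalent_lam_succ : s.lam ~[atTop] fun n => s.lam (n + 1) :=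
  s.isLittleO_lam_sub.trans_isBigO s.isBigO_rate_lam_succ

theorem isEquivalent_α_succ : s.α ~[atTop] fun n => s.α (n + 1) :=
  s.isLittleO_α_sub.trans_isBigO s.isBigO_rate_α_succ

theorem isBigO_rate_lam : s.rate =O[atTop] s.lam :=
  s.isBigO_rate_lam_succ.trans s.isEquivalent_lam_succ.isBigO_symm

theorem isBigO_α_succ_succ : (fun n => s.α (n + 1 + 1)) =O[atTop] fun n => s.α (n + 1) :=
  s.isEquivalent_α_succ.isBigO_symm.comp_tendsto (tendsto_add_atTop_nat 1)

theorem isLittleO_θ : s.θ =o[atTop] s.rate :=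
  isLittleO_of_tendsto
    (fun n hn => absurd hn (mul_pos (s.α_pos (n + 1)) (s.lam_pos (n + 1))).ne') s.θ_div

theorem isLittleO_θ_succ : (fun n => s.θ (n + 1)) =o[atTop] s.rate :=
  (s.isLittleO_θ.comp_tendsto (tendsto_add_atTop_nat 1)).trans_isBigO
    (s.isBigO_α_succ_succ.mul
      (s.isEquivalent_lam_succ.isBigO_symm.comp_tendsto (tendsto_add_atTop_nat 1)))

theorem isLittleO_β : s.β =o[atTop] fun n => s.α (n + 1) :=
  isLittleO_of_tendsto (fun n hn => absurd hn (s.α_pos (n + 1)).ne') s.β_div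

theorem isLittleO_lam_mul_β : (fun n => s.lam n * s.β n) =o[atTop] s.rate :=
  (s.isEquivalent_lam_succ.isBigO.mul_isLittleO s.isLittleO_β).congr_right
    fun _ => mul_comm _ _

theorem isLittleO_lam_mul_β_succ :
    (fun n => s.lam (n + 1) * s.β (n + 1)) =o[atTop] s.rate :=
  ((isBigO_refl (fun n => s.lam (n + 1)) atTop).mul_isLittleO
    ((s.isLittleO_β.comp_tendsto (tendsto_add_atTop_nat 1)).trans_isBigO
      s.isBigO_α_succ_succ)).congr_right fun _ => mul_comm _ _

theorem isLittleO_α_lam : s.α =o[atTop] s.lam :=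
  isLittleO_of_tendsto (fun n hn => absurd hn (s.lam_pos n).ne') s.α_div_lam

theorem tendsto_α : Tendsto s.α atTop (𝓝 0) :=
  (isLittleO_one_iff ℝ).1 (s.isLittleO_α_lam.trans s.isLittleO_lam_one)

theorem tendsto_β : Tendsto s.β atTop (𝓝 0) :=
  (isLittleO_one_iff ℝ).1 (s.isLittleO_β.trans_isBigO
    (s.isBigO_α_one.comp_tendsto (tendsto_add_atTop_nat 1)))

theorem isLittleO_θ_lam : s.θ =o[atTop] s.lam :=
  s.isLittleO_θ.trans_isBigO s.isBigO_rate_lam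

theorem not_summable_α_succ : ¬ Summable fun n => s.α (n + 1) :=
  (summable_nat_add_iff 1).not.2 s.α_not_summable

end StepSizes

/-- The problem of minimizing `∑ i, (f i + h i)` over the common fixed points of the `T i`, where
`i` runs through `Finset.Icc 1 M` as in the paper. -/
structure CompositeProblem (H : Type*) [NormedAddCommGroup H] [InnerProductSpace ℝ H]
    [CompleteSpace H] where
  M : ℕ
  one_le_M : 1 ≤ M
  (f h : ℕ → H → ℝ)
  (grad T : ℕ → H → H)
  f_lsc : ∀ i ∈ Finset.Icc 1 M, LowerSemicontinuous (f i)
  f_convex : ∀ i ∈ Finset.Icc 1 M, ConvexOn ℝ Set.univ (f i)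
  h_convex : ∀ i ∈ Finset.Icc 1 M, ConvexOn ℝ Set.univ (h i)
  h_gradient : ∀ i ∈ Finset.Icc 1 M, ∀ x, HasGradientAt (h i) (grad i x) x
  grad_lipschitz : ∀ i ∈ Finset.Icc 1 M, ∃ K : ℝ≥0, LipschitzWith K (grad i)
  T_firm : ∀ i ∈ Finset.Icc 1 M, FirmlyNonexpansive (T i)

section Convergence

variable {H : Type*} [NormedAddCommGroup H] [InnerProductSpace ℝ H] [CompleteSpace H]

namespace CompositeProblem

variable (P : CompositeProblem H)

/-- The objective `ψ`. -/
def objective (v : H) : ℝ :=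
  ∑ i ∈ Finset.Icc 1 P.M, (P.f i v + P.h i v)

/-- The feasible set `S`. -/
def constraintSet : Set H :=
  ⋂ i ∈ Finset.Icc 1 P.M, {x | P.T i x = x}

/-- The solution set `Ω`. -/
def solutionSet : Set H :=
  {p | p ∈ P.constraintSet ∧ ∀ v ∈ P.constraintSet, P.objective p ≤ P.objective v}

theorem convex_constraintSet : Convex ℝ P.constraintSet :=
  convex_iInter₂ fun i hi => (P.T_firm i hi).convex_fixedPoints

theorem solutionSet_subsingleton (hψ : StrictConvexOn ℝ Set.univ P.objective) :
    P.solutionSet.Subsingleton := fun _ hp _ hq =>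
  (hψ.subset (Set.subset_univ _) P.convex_constraintSet).eq_of_isMinOn
    (isMinOn_iff.2 hp.2) (isMinOn_iff.2 hq.2) hp.1 hq.1

end CompositeProblem

/-- The sequences generated by the algorithm for the problem `P` with parameters `s`, subject to
boundedness of the proximal points. The outer iterate `x n` of the paper is `w n 1`. -/
structure BoundedRun (P : CompositeProblem H) (s : StepSizes) where
  (w z y d : ℕ → ℕ → H)
  u : ℕ → H
  z_eq : ∀ n ≥ 1, ∀ i ∈ Finset.Icc 1 P.M, z n i = w n i + s.θ n • (w n i - w (n - 1) i)
  d_succ : ∀ n ≥ 1, ∀ i ∈ Finset.Icc 1 P.M, d (n + 1) i = -P.grad i (z n i) + s.β n • d n i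
  y_isProx : ∀ n ≥ 1, ∀ i ∈ Finset.Icc 1 P.M,
    IsProx (P.f i) (s.lam n) (z n i + s.lam n • d (n + 1) i) (y n i)
  w_right_succ : ∀ n ≥ 1, ∀ i ∈ Finset.Icc 1 P.M,
    w n (i + 1) = s.α n • u i + (1 - s.α n) • P.T i (y n i)
  w_left_succ_one : ∀ n ≥ 1, w (n + 1) 1 = w n (P.M + 1)
  isBigO_y : ∀ i ∈ Finset.Icc 1 P.M, (fun n => y n i) =O[atTop] fun _ => (1 : ℝ)

namespace BoundedRun

variable {P : CompositeProblem H} {s : StepSizes} (r : BoundedRun P s) {i : ℕ}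

section Boundedness

theorem isBigO_T_y (hi : i ∈ Finset.Icc 1 P.M) :
    (fun n => P.T i (r.y n i)) =O[atTop] fun _ => (1 : ℝ) :=
  isBigO_one_comp_of_lipschitzWith (P.T_firm i hi).lipschitzWith (r.isBigO_y i hi)

theorem isBigO_w_succ (hi : i ∈ Finset.Icc 1 P.M) :
    (fun n => r.w n (i + 1)) =O[atTop] fun _ => (1 : ℝ) := by
  have hone_sub : (fun n => 1 - s.α n) =O[atTop] fun _ => (1 : ℝ) :=
    (isBigO_refl _ _).sub s.isBigO_α_one
  have hcomb := (s.isBigO_α_one.smul (isBigO_const_const (r.u i) one_ne_zero atTop)).add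
    (hone_sub.smul (r.isBigO_T_y hi))
  refine hcomb.congr' ?_ (by simp)
  filter_upwards [eventually_ge_atTop 1] with n hn
  exact (r.w_right_succ n hn i hi).symm

theorem isBigO_w (hi : i ∈ Finset.Icc 1 P.M) :
    (fun n => r.w n i) =O[atTop] fun _ => (1 : ℝ) := by
  obtain ⟨hi₁, hiM⟩ := Finset.mem_Icc.1 hi
  rcases hi₁.eq_or_lt with rfl | hlt
  · rw [← map_add_atTop_eq_nat 1, isBigO_map]
    refine (r.isBigO_w_succ (Finset.right_mem_Icc.2 P.one_le_M)).congr' ?_ EventuallyEq.rfl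
    filter_upwards [eventually_ge_atTop 1] with n hn
    exact (r.w_left_succ_one n hn).symm
  · obtain ⟨j, rfl⟩ := Nat.exists_eq_add_of_lt hlt
    rw [add_comm 1 j]
    exact r.isBigO_w_succ (Finset.mem_Icc.2 ⟨by omega, by omega⟩)

theorem isBigO_w_sub_pred (hi : i ∈ Finset.Icc 1 P.M) :
    (fun n => r.w n i - r.w (n - 1) i) =O[atTop] fun _ => (1 : ℝ) :=
  (r.isBigO_w hi).sub ((r.isBigO_w hi).comp_tendsto (tendsto_sub_atTop_nat 1))

theorem isLittleO_z_sub_w (hi : i ∈ Finset.Icc 1 P.M) :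
    (fun n => r.z n i - r.w n i) =o[atTop] s.lam := by
  refine (s.isLittleO_θ_lam.smul_isBigO (r.isBigO_w_sub_pred hi)).congr' ?_ (by simp)
  filter_upwards [eventually_ge_atTop 1] with n hn
  rw [r.z_eq n hn i hi, add_sub_cancel_left]

theorem isBigO_z (hi : i ∈ Finset.Icc 1 P.M) :
    (fun n => r.z n i) =O[atTop] fun _ => (1 : ℝ) := by
  simpa using ((r.isLittleO_z_sub_w hi).isBigO.trans s.isBigO_lam_one).add (r.isBigO_w hi)

theorem isBigO_grad_z (hi : i ∈ Finset.Icc 1 P.M) :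
    (fun n => P.grad i (r.z n i)) =O[atTop] fun _ => (1 : ℝ) :=
  let ⟨_, hlip⟩ := P.grad_lipschitz i hi
  isBigO_one_comp_of_lipschitzWith hlip (r.isBigO_z hi)

theorem isBigO_d (hi : i ∈ Finset.Icc 1 P.M) :
    (fun n => r.d n i) =O[atTop] fun _ => (1 : ℝ) := by
  refine isBigO_norm_left.1 (isBigO_one_of_le_add_mul (fun n => norm_nonneg _)
    (r.isBigO_grad_z hi).norm_left (by simpa using s.tendsto_β.abs) ?_)
  filter_upwards [eventually_ge_atTop 1] with n hn
  rw [r.d_succ n hn i hi, ← Real.norm_eq_abs, ← norm_smul, ← norm_neg (P.grad i _)]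
  exact norm_add_le _ _

end Boundedness

section Increments

theorem norm_z_sub_le (hi : i ∈ Finset.Icc 1 P.M) :
    LEAddLittleO atTop s.rate (fun n => ‖r.z (n + 1) i - r.z n i‖)
      fun n => ‖r.w (n + 1) i - r.w n i‖ := by
  have hincr := (r.isBigO_w_sub_pred hi).norm_left
  have herr := (s.isLittleO_θ_succ.norm_left.mul_isBigO
    (hincr.comp_tendsto (tendsto_add_atTop_nat 1))).add (s.isLittleO_θ.norm_left.mul_isBigO hincr)
  refine ⟨_, herr.congr_right fun _ => mul_one _, ?_⟩
  filter_upwards [eventually_ge_atTop 1] with n hn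
  rw [r.z_eq n hn i hi, r.z_eq (n + 1) (by omega) i hi]
  exact norm_inertial_sub_le _ _ _ _ _

theorem norm_forward_sub_le (hi : i ∈ Finset.Icc 1 P.M) :
    LEAddLittleO atTop s.rate
      (fun n => ‖(r.z (n + 1) i + s.lam (n + 1) • r.d (n + 1 + 1) i) -
        (r.z n i + s.lam n • r.d (n + 1) i)‖)
      fun n => ‖r.z (n + 1) i - r.z n i‖ := by
  obtain ⟨K, hlip⟩ := P.grad_lipschitz i hi
  have hsmall : ∀ᶠ n in atTop, s.lam (n + 1) * K ≤ 2 := by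
    have hlim := (s.lam_tendsto.comp (tendsto_add_atTop_nat 1)).mul_const (K : ℝ)
    rw [zero_mul] at hlim
    exact hlim.eventually_le_const two_pos
  have hd := (r.isBigO_d hi).norm_left
  have herr := ((s.isLittleO_lam_sub.norm_left.mul_isBigO (r.isBigO_grad_z hi).norm_left).add
    (s.isLittleO_lam_mul_β_succ.norm_left.mul_isBigO
      (hd.comp_tendsto (tendsto_add_atTop_nat 1)))).add
    (s.isLittleO_lam_mul_β.norm_left.mul_isBigO hd)
  refine ⟨_, herr.congr_right fun _ => mul_one _, ?_⟩
  filter_upwards [eventually_ge_atTop 1, hsmall] with n hn hK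
  rw [r.d_succ n hn i hi, r.d_succ (n + 1) (by omega) i hi]
  exact norm_forward_step_sub_le (norm_sub_sub_smul_gradient_le (P.h_convex i hi)
    (P.h_gradient i hi) hlip (s.lam_pos _).le hK _ _)

theorem norm_y_sub_le (hi : i ∈ Finset.Icc 1 P.M) :
    LEAddLittleO atTop s.rate (fun n => ‖r.y (n + 1) i - r.y n i‖)
      fun n => ‖(r.z (n + 1) i + s.lam (n + 1) • r.d (n + 1 + 1) i) -
        (r.z n i + s.lam n • r.d (n + 1) i)‖ := by
  have hforward : (fun n => s.lam n • r.d (n + 1) i) =O[atTop] fun _ => (1 : ℝ) := by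
    simpa using s.isBigO_lam_one.smul ((r.isBigO_d hi).comp_tendsto (tendsto_add_atTop_nat 1))
  have hresidual := (((r.isBigO_z hi).add hforward).sub (r.isBigO_y i hi)).norm_left
  refine ⟨_, (s.isLittleO_one_sub_lam_ratio.norm_left.mul_isBigO hresidual).congr_right
    fun _ => mul_one _, ?_⟩
  filter_upwards [eventually_ge_atTop 1] with n hn
  exact (r.y_isProx n hn i hi).norm_sub_le (r.y_isProx (n + 1) (by omega) i hi)
    (P.f_convex i hi) (s.lam_pos _) (s.lam_pos _)

theorem norm_w_right_succ_sub_le_mul_norm_y_sub (hi : i ∈ Finset.Icc 1 P.M) :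
    LEAddLittleO atTop s.rate (fun n => ‖r.w (n + 1) (i + 1) - r.w n (i + 1)‖)
      fun n => (1 - s.α (n + 1)) * ‖r.y (n + 1) i - r.y n i‖ := by
  have hanchor := ((isBigO_const_const (r.u i) one_ne_zero atTop).sub (r.isBigO_T_y hi)).norm_left
  refine ⟨_, (s.isLittleO_α_sub.norm_left.mul_isBigO hanchor).congr_right fun _ => mul_one _, ?_⟩
  filter_upwards [eventually_ge_atTop 1] with n hn
  rw [r.w_right_succ n hn i hi, r.w_right_succ (n + 1) (by omega) i hi]
  exact (norm_halpern_sub_le (s.α_le_one _) _ _ _).trans (add_le_add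
    (mul_le_mul_of_nonneg_left ((P.T_firm i hi).norm_sub_le _ _) (sub_nonneg.2 (s.α_le_one _)))
    le_rfl)

theorem norm_w_right_succ_sub_le (hi : i ∈ Finset.Icc 1 P.M) :
    LEAddLittleO atTop s.rate (fun n => ‖r.w (n + 1) (i + 1) - r.w n (i + 1)‖)
      fun n => (1 - s.α (n + 1)) * ‖r.w (n + 1) i - r.w n i‖ := by
  have hy := ((r.norm_y_sub_le hi).trans (r.norm_forward_sub_le hi)).trans (r.norm_z_sub_le hi)
  exact (r.norm_w_right_succ_sub_le_mul_norm_y_sub hi).trans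
    ((hy.mul_left fun n => sub_nonneg.2 (s.α_le_one (n + 1))).mono s.isBigO_one_sub_α_mul_rate)

theorem norm_w_left_succ_sub_le :
    LEAddLittleO atTop s.rate (fun n => ‖r.w (n + 1 + 1) 1 - r.w (n + 1) 1‖)
      fun n => (1 - s.α (n + 1)) * ‖r.w (n + 1) 1 - r.w n 1‖ := by
  obtain ⟨m, hm⟩ := Nat.exists_eq_add_of_le' P.one_le_M
  have hfirst : LEAddLittleO atTop s.rate (fun n => ‖r.w (n + 1) P.M - r.w n P.M‖)
      fun n => ‖r.w (n + 1) 1 - r.w n 1‖ := by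
    have hchain := LEAddLittleO.telescope (F := atTop) (s := s.rate) (m := m) (D := fun _ _ => 0)
      (A := fun i n => ‖r.w (n + 1) i - r.w n i‖) fun i hi => by
        have hiM : i ∈ Finset.Icc 1 P.M := Finset.Icc_subset_Icc_right (by omega) hi
        simpa only [add_zero] using (r.norm_w_right_succ_sub_le hiM).trans
          (.of_eventually_le (Eventually.of_forall fun n =>
            mul_le_of_le_one_left (norm_nonneg _) (sub_le_self _ (s.α_pos _).le)))
    simpa only [hm, Finset.sum_const_zero, add_zero] using hchain
  have hwrap : ∀ᶠ n in atTop, ‖r.w (n + 1 + 1) 1 - r.w (n + 1) 1‖ ≤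
      ‖r.w (n + 1) (P.M + 1) - r.w n (P.M + 1)‖ := by
    filter_upwards [eventually_ge_atTop 1] with n hn
    rw [r.w_left_succ_one n hn, r.w_left_succ_one (n + 1) (by omega)]
  exact (LEAddLittleO.of_eventually_le hwrap).trans
    ((r.norm_w_right_succ_sub_le (Finset.right_mem_Icc.2 P.one_le_M)).trans
      ((hfirst.mul_left fun n => sub_nonneg.2 (s.α_le_one (n + 1))).mono
        s.isBigO_one_sub_α_mul_rate))

theorem isBigO_w_left_succ_sub :
    (fun n => r.w (n + 1) 1 - r.w n 1) =O[atTop] fun _ => (1 : ℝ) :=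
  (r.isBigO_w_sub_pred (Finset.left_mem_Icc.2 P.one_le_M)).comp_tendsto (tendsto_add_atTop_nat 1)

theorem norm_w_left_succ_sub_div_lam_le :
    LEAddLittleO atTop (fun n => s.α (n + 1))
      (fun n => 1 / s.lam (n + 1) * ‖r.w (n + 1 + 1) 1 - r.w (n + 1) 1‖)
      fun n => (1 - s.α (n + 1)) * (1 / s.lam n * ‖r.w (n + 1) 1 - r.w n 1‖) := by
  have hscaled := r.norm_w_left_succ_sub_le.mul_left
    fun n => (one_div_pos.2 (s.lam_pos (n + 1))).le
  have hrate (n : ℕ) : 1 / s.lam (n + 1) * s.rate n = s.α (n + 1) := by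
    rw [StepSizes.rate, one_div, mul_comm, mul_inv_cancel_right₀ (s.lam_pos _).ne']
  simp only [hrate] at hscaled
  have hone_sub : (fun n => 1 - s.α (n + 1)) =O[atTop] fun _ => (1 : ℝ) :=
    ((isBigO_refl _ _).sub s.isBigO_α_one).comp_tendsto (tendsto_add_atTop_nat 1)
  refine hscaled.trans ⟨_, (s.isLittleO_inv_lam_sub.mul_isBigO
    (hone_sub.mul r.isBigO_w_left_succ_sub.norm_left)).congr_right fun n => by
      rw [mul_one, mul_one], Eventually.of_forall fun n => le_of_eq ?_⟩
  ring

theorem isLittleO_w_left_succ_sub :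
    (fun n => r.w (n + 1) 1 - r.w n 1) =o[atTop] s.lam := by
  refine isLittleO_norm_left.1 (isLittleO_of_tendsto (fun n hn => absurd hn (s.lam_pos n).ne') ?_)
  refine (tendsto_zero_of_le_one_sub_mul
    (fun n => mul_nonneg (one_div_pos.2 (s.lam_pos n)).le (norm_nonneg _))
    (fun n => (s.α_pos _).le) (fun n => s.α_le_one _) s.not_summable_α_succ
    r.norm_w_left_succ_sub_div_lam_le).congr fun n => one_div_mul_eq_div _ _

end Increments

section Descent

/-- The first-order surrogate of `(f i + h i) (y n i) - (f i + h i) v`, in which `h i` is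
linearized at `z n i`, the only point where the algorithm evaluates its gradient. -/
def linearizedGap (i : ℕ) (v : H) (n : ℕ) : ℝ :=
  P.f i (r.y n i) - P.f i v + ⟪P.grad i (r.z n i), r.y n i - v⟫_ℝ

/-- The decrease of `‖w n i - v‖ ^ 2` guaranteed by the `i`-th inner step, up to `o(lam)`. -/
def decrease (i : ℕ) (v : H) (n : ℕ) : ℝ :=
  ‖r.z n i - r.y n i‖ ^ 2 + ‖r.y n i - P.T i (r.y n i)‖ ^ 2 + 2 * s.lam n * r.linearizedGap i v n

theorem norm_y_sub_sq_add_le (hi : i ∈ Finset.Icc 1 P.M) (v : H) :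
    LEAddLittleO atTop s.lam
      (fun n => ‖r.y n i - v‖ ^ 2 + ‖r.z n i - r.y n i‖ ^ 2 + 2 * s.lam n * r.linearizedGap i v n)
      fun n => ‖r.z n i - v‖ ^ 2 := by
  have hmomentum := isBigO_inner_one (r.isBigO_d hi)
    ((r.isBigO_y i hi).sub (isBigO_const_const v one_ne_zero atTop))
  have herr := ((isBigO_refl s.lam atTop).mul_isLittleO
    (((isLittleO_one_iff ℝ).2 s.tendsto_β).mul_isBigO hmomentum)).const_mul_left 2
  refine ⟨_, herr.congr_right fun _ => by rw [mul_one, mul_one], ?_⟩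
  filter_upwards [eventually_ge_atTop 1] with n hn
  have hprox := (r.y_isProx n hn i hi).norm_sub_sq_add_le (P.f_convex i hi) (s.lam_pos n) v
  rw [r.d_succ n hn i hi, inner_add_left, inner_neg_left, real_inner_smul_left] at hprox
  simp only [linearizedGap]
  linarith

theorem norm_w_right_succ_sub_sq_add_le (hi : i ∈ Finset.Icc 1 P.M) {v : H} (hv : P.T i v = v) :
    LEAddLittleO atTop s.lam (fun n => ‖r.w n (i + 1) - v‖ ^ 2 + r.decrease i v n)
      fun n => ‖r.w n i - v‖ ^ 2 := by
  refine LEAddLittleO.trans ⟨_, s.isLittleO_α_lam.mul_isBigO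
    (isBigO_const_const (‖r.u i - v‖ ^ 2) one_ne_zero atTop) |>.congr_right fun _ => mul_one _, ?_⟩
    ((r.norm_y_sub_sq_add_le hi v).trans
      (.norm_sub_sq (r.isLittleO_z_sub_w hi) (r.isBigO_z hi) (r.isBigO_w hi) v))
  filter_upwards [eventually_ge_atTop 1] with n hn
  have hhalpern := norm_halpern_sub_sq_le (s.α_pos n).le (s.α_le_one n) (r.u i)
    (P.T i (r.y n i)) v
  have hfirm := (P.T_firm i hi).norm_sub_sq_add_le hv (r.y n i)
  rw [r.w_right_succ n hn i hi]
  simp only [decrease]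
  linarith

theorem sum_decrease_le {v : H} (hv : v ∈ P.constraintSet) :
    LEAddLittleO atTop s.lam (fun n => ∑ i ∈ Finset.Icc 1 P.M, r.decrease i v n) fun _ => 0 := by
  have hchain := LEAddLittleO.telescope (A := fun i n => ‖r.w n i - v‖ ^ 2)
    (D := fun i => r.decrease i v) fun i hi =>
      r.norm_w_right_succ_sub_sq_add_le hi (Set.mem_iInter₂.1 hv i hi)
  have hw := r.isBigO_w (Finset.left_mem_Icc.2 P.one_le_M)
  have hreturn := LEAddLittleO.norm_sub_sq (r.isLittleO_w_left_succ_sub.neg_left.congr_left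
    fun n => neg_sub _ _) hw (hw.comp_tendsto (tendsto_add_atTop_nat 1)) v
  obtain ⟨e, he, hle⟩ := hchain.trans hreturn
  refine ⟨e, he, ?_⟩
  filter_upwards [hle, eventually_ge_atTop 1] with n hle hn
  rw [r.w_left_succ_one n hn] at hle
  linarith

end Descent

section AsymptoticRegularity

theorem exists_isBigO_one_le_linearizedGap (hi : i ∈ Finset.Icc 1 P.M) (v : H) :
    ∃ b : ℕ → ℝ, b =O[atTop] (fun _ => (1 : ℝ)) ∧ ∀ n, b n ≤ r.linearizedGap i v n := by
  obtain ⟨c, hc⟩ := exists_composite_lower_bound (P.f_convex i hi) (P.f_lsc i hi)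
    (P.h_convex i hi) (P.h_gradient i hi) v one_pos
  have hconst (x : H) : (fun _ : ℕ => x) =O[atTop] fun _ => (1 : ℝ) :=
    isBigO_const_const x one_ne_zero _
  have hy := r.isBigO_y i hi
  have hz := r.isBigO_z hi
  exact ⟨_, (isBigO_const_const _ one_ne_zero _).add
    (((isBigO_inner_one (hconst c) (hy.sub (hconst v))).add
      (isBigO_inner_one (hconst (P.grad i v)) (hz.sub (hconst v)))).add
      (isBigO_inner_one (r.isBigO_grad_z hi) (hy.sub hz))), fun n => hc v (r.z n i) (r.y n i)⟩

theorem residual_sq_le_decrease (hi : i ∈ Finset.Icc 1 P.M) (v : H) :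
    LEAddLittleO atTop (fun _ => 1)
      (fun n => ‖r.z n i - r.y n i‖ ^ 2 + ‖r.y n i - P.T i (r.y n i)‖ ^ 2)
      (r.decrease i v) := by
  obtain ⟨b, hb, hle⟩ := r.exists_isBigO_one_le_linearizedGap hi v
  refine ⟨_, ((s.isLittleO_lam_one.mul_isBigO hb).const_mul_left (-2)).congr_right
    fun _ => mul_one _, Eventually.of_forall fun n => ?_⟩
  have hscaled := mul_le_mul_of_nonneg_left (hle n) (s.lam_pos n).le
  simp only [decrease]
  linarith

theorem tendsto_residual_sq (hS : P.constraintSet.Nonempty) (hi : i ∈ Finset.Icc 1 P.M) :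
    Tendsto (fun n => ‖r.z n i - r.y n i‖ ^ 2 + ‖r.y n i - P.T i (r.y n i)‖ ^ 2) atTop (𝓝 0) := by
  obtain ⟨v, hv⟩ := hS
  have hsum := (LEAddLittleO.sum fun i hi => r.residual_sq_le_decrease hi v).trans
    ((r.sum_decrease_le hv).mono s.isBigO_lam_one)
  have hlim := hsum.tendsto_zero fun n => by positivity
  exact squeeze_zero (fun n => by positivity)
    (fun n => Finset.single_le_sum (f := fun i =>
      ‖r.z n i - r.y n i‖ ^ 2 + ‖r.y n i - P.T i (r.y n i)‖ ^ 2) (fun _ _ => by positivity) hi) hlim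

theorem tendsto_z_sub_y (hS : P.constraintSet.Nonempty) (hi : i ∈ Finset.Icc 1 P.M) :
    Tendsto (fun n => r.z n i - r.y n i) atTop (𝓝 0) := by
  have hsq := squeeze_zero (fun n => by positivity)
    (fun n => le_add_of_nonneg_right (sq_nonneg _)) (r.tendsto_residual_sq hS hi)
  exact tendsto_zero_iff_norm_tendsto_zero.2 (by simpa using hsq.sqrt)

theorem tendsto_y_sub_T_y (hS : P.constraintSet.Nonempty) (hi : i ∈ Finset.Icc 1 P.M) :
    Tendsto (fun n => r.y n i - P.T i (r.y n i)) atTop (𝓝 0) := by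
  have hsq := squeeze_zero (fun n => by positivity)
    (fun n => le_add_of_nonneg_left (sq_nonneg _)) (r.tendsto_residual_sq hS hi)
  exact tendsto_zero_iff_norm_tendsto_zero.2 (by simpa using hsq.sqrt)

theorem tendsto_w_sub_z (hi : i ∈ Finset.Icc 1 P.M) :
    Tendsto (fun n => r.w n i - r.z n i) atTop (𝓝 0) := by
  simpa using ((isLittleO_one_iff ℝ).1
    ((r.isLittleO_z_sub_w hi).trans s.isLittleO_lam_one)).neg

theorem tendsto_T_y_sub_w_right_succ (hi : i ∈ Finset.Icc 1 P.M) :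
    Tendsto (fun n => P.T i (r.y n i) - r.w n (i + 1)) atTop (𝓝 0) := by
  have hanchor := (r.isBigO_T_y hi).sub (isBigO_const_const (r.u i) (one_ne_zero (α := ℝ)) _)
  refine (isLittleO_one_iff ℝ).1 ((((isLittleO_one_iff ℝ).2 s.tendsto_α).smul_isBigO
    hanchor).congr' ?_ (by simp))
  filter_upwards [eventually_ge_atTop 1] with n hn
  rw [r.w_right_succ n hn i hi]
  module

end AsymptoticRegularity

section WeakLimits

variable {F : Filter ℕ} {p : H}

theorem weakTendsto_z (hF : F ≤ atTop) (hi : i ∈ Finset.Icc 1 P.M)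
    (hp : WeakTendsto (fun n => r.w n i) F p) : WeakTendsto (fun n => r.z n i) F p :=
  hp.of_sub_tendsto_zero ((r.tendsto_w_sub_z hi).mono_left hF)

theorem weakTendsto_y (hF : F ≤ atTop) (hS : P.constraintSet.Nonempty)
    (hi : i ∈ Finset.Icc 1 P.M) (hp : WeakTendsto (fun n => r.w n i) F p) :
    WeakTendsto (fun n => r.y n i) F p :=
  (r.weakTendsto_z hF hi hp).of_sub_tendsto_zero ((r.tendsto_z_sub_y hS hi).mono_left hF)

theorem weakTendsto_w (hF : F ≤ atTop) (hS : P.constraintSet.Nonempty)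
    (hp : WeakTendsto (fun n => r.w n 1) F p) (hi : i ∈ Finset.Icc 1 P.M) :
    WeakTendsto (fun n => r.w n i) F p := by
  obtain ⟨hi₁, hiM⟩ := Finset.mem_Icc.1 hi
  induction i, hi₁ using Nat.le_induction with
  | base => exact hp
  | succ i hi₁ ih =>
    have hi' : i ∈ Finset.Icc 1 P.M := Finset.mem_Icc.2 ⟨hi₁, by omega⟩
    exact ((r.weakTendsto_y hF hS hi' (ih hi' (by omega))).of_sub_tendsto_zero
      ((r.tendsto_y_sub_T_y hS hi').mono_left hF)).of_sub_tendsto_zero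
      ((r.tendsto_T_y_sub_w_right_succ hi').mono_left hF)

theorem mem_constraintSet_of_weakTendsto [F.NeBot] (hF : F ≤ atTop)
    (hS : P.constraintSet.Nonempty) (hp : WeakTendsto (fun n => r.w n 1) F p) :
    p ∈ P.constraintSet :=
  Set.mem_iInter₂.2 fun i hi => (P.T_firm i hi).eq_of_weakTendsto ((r.isBigO_y i hi).mono hF)
    (r.weakTendsto_y hF hS hi (r.weakTendsto_w hF hS hp hi))
    ((r.tendsto_y_sub_T_y hS hi).mono_left hF)

theorem sum_linearizedGap_le {v : H} (hv : v ∈ P.constraintSet) :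
    LEAddLittleO atTop (fun _ => 1) (fun n => ∑ i ∈ Finset.Icc 1 P.M, r.linearizedGap i v n)
      fun _ => 0 := by
  have hgap : LEAddLittleO atTop s.lam
      (fun n => s.lam n * (2 * ∑ i ∈ Finset.Icc 1 P.M, r.linearizedGap i v n)) fun _ => 0 := by
    refine (LEAddLittleO.of_eventually_le (Eventually.of_forall fun n => ?_)).trans
      (r.sum_decrease_le hv)
    rw [mul_left_comm, ← mul_assoc, Finset.mul_sum]
    refine Finset.sum_le_sum fun i _ => ?_
    simp only [decrease]
    linarith [sq_nonneg ‖r.z n i - r.y n i‖, sq_nonneg ‖r.y n i - P.T i (r.y n i)‖]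
  have hscaled := hgap.mul_left (c := fun n => 1 / 2 * (s.lam n)⁻¹)
    fun n => mul_nonneg one_half_pos.le (inv_nonneg.2 (s.lam_pos n).le)
  have hcancel (n : ℕ) (a : ℝ) : 1 / 2 * (s.lam n)⁻¹ * (s.lam n * (2 * a)) = a := by
    field_simp [(s.lam_pos n).ne']
  have hrate (n : ℕ) : 1 / 2 * (s.lam n)⁻¹ * s.lam n = 1 / 2 :=
    inv_mul_cancel_right₀ (s.lam_pos n).ne' _
  simp only [hcancel, hrate, mul_zero] at hscaled
  exact hscaled.mono (isBigO_const_const _ one_ne_zero _)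

theorem exists_tendsto_le_linearizedGap (hF : F ≤ atTop) (hS : P.constraintSet.Nonempty)
    (hp : WeakTendsto (fun n => r.w n 1) F p) (hi : i ∈ Finset.Icc 1 P.M) (v : H) {ε : ℝ}
    (hε : 0 < ε) : ∃ b : ℕ → ℝ,
      Tendsto b F (𝓝 (P.f i p + P.h i p - (P.f i v + P.h i v) - ε)) ∧
        ∀ n, b n ≤ r.linearizedGap i v n := by
  obtain ⟨c, hc⟩ := exists_composite_lower_bound (P.f_convex i hi) (P.f_lsc i hi)
    (P.h_convex i hi) (P.h_gradient i hi) p hε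
  have hw := r.weakTendsto_w hF hS hp hi
  have hz := r.weakTendsto_z hF hi hw
  have hy := r.weakTendsto_y hF hS hi hw
  have hc_lim := hy.tendsto_inner_sub c
  have hgrad_lim := hz.tendsto_inner_sub (P.grad i p)
  have hcross_lim := tendsto_inner_zero ((r.isBigO_grad_z hi).mono hF)
    (by simpa using ((r.tendsto_z_sub_y hS hi).mono_left hF).neg)
  have hlim := ((hc_lim.add hgrad_lim).add hcross_lim).const_add
    (P.f i p + P.h i p - (P.f i v + P.h i v) - ε)
  simp only [add_zero] at hlim
  exact ⟨_, hlim, fun n => hc v (r.z n i) (r.y n i)⟩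

theorem mem_solutionSet_of_weakTendsto [F.NeBot] (hF : F ≤ atTop) (hS : P.constraintSet.Nonempty)
    (hp : WeakTendsto (fun n => r.w n 1) F p) : p ∈ P.solutionSet := by
  refine ⟨r.mem_constraintSet_of_weakTendsto hF hS hp, fun v hv => ?_⟩
  refine le_of_forall_pos_le_add fun ε hε => ?_
  have hM : (0 : ℝ) < P.M := Nat.cast_pos.2 P.one_le_M
  choose! b hb hle using fun i (hi : i ∈ Finset.Icc 1 P.M) =>
    r.exists_tendsto_le_linearizedGap hF hS hp hi v (div_pos hε hM)
  obtain ⟨e, he, hgap⟩ := r.sum_linearizedGap_le hv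
  have hlim := le_of_tendsto_of_tendsto (tendsto_finsetSum _ hb)
    (((isLittleO_one_iff ℝ).1 he).mono_left hF) (by
      filter_upwards [hF hgap] with n hn
      rw [zero_add] at hn
      exact (Finset.sum_le_sum fun i hi => hle i hi n).trans hn)
  simp only [Finset.sum_sub_distrib, Finset.sum_const, Nat.card_Icc, add_tsub_cancel_right,
    nsmul_eq_mul, mul_div_cancel₀ _ hM.ne'] at hlim
  rw [CompositeProblem.objective, CompositeProblem.objective]
  linarith

theorem exists_mem_solutionSet_weakTendsto (U : Ultrafilter ℕ) (hU : (U : Filter ℕ) ≤ atTop)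
    (hS : P.constraintSet.Nonempty) : ∃ p ∈ P.solutionSet,
      ∀ i ∈ Finset.Icc 1 P.M, WeakTendsto (fun n => r.w n i) U p := by
  obtain ⟨p, hp⟩ := exists_weakTendsto_ultrafilter U
    ((r.isBigO_w (Finset.left_mem_Icc.2 P.one_le_M)).mono hU)
  exact ⟨p, r.mem_solutionSet_of_weakTendsto hU hS hp, fun i hi => r.weakTendsto_w hU hS hp hi⟩

end WeakLimits

end BoundedRun

theorem alg1_weak_convergence_strict_convex_general {P : CompositeProblem H} {s : StepSizes}
    (r : BoundedRun P s) (hS : P.constraintSet.Nonempty) (hΩ : P.solutionSet.Subsingleton) :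
    ∃ p ∈ P.solutionSet, ∀ i ∈ Finset.Icc 1 P.M, WeakTendsto (fun n => r.w n i) atTop p := by
  obtain ⟨p, hp, -⟩ := r.exists_mem_solutionSet_weakTendsto (Ultrafilter.of atTop)
    (Ultrafilter.of_le _) hS
  refine ⟨p, hp, fun i hi q => tendsto_iff_ultrafilter _ _ _ |>.2 fun U hU => ?_⟩
  obtain ⟨p', hp', hlim⟩ := r.exists_mem_solutionSet_weakTendsto U hU hS
  rw [hΩ hp hp']
  exact hlim i hi q

end Convergence

theorem alg1_weak_convergence_strict_convex
    {H : Type*} [NormedAddCommGroup H] [InnerProductSpace ℝ H] [CompleteSpace H]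
    (M : ℕ) (hM : 1 ≤ M)
    (f h : ℕ → H → ℝ) (h' : ℕ → H → H) (L : ℕ → ℝ) (T : ℕ → H → H)
    (hf_cont : ∀ i ∈ Finset.Icc 1 M, Continuous (f i))
    (hf_conv : ∀ i ∈ Finset.Icc 1 M, ConvexOn ℝ Set.univ (f i))
    (hh_conv : ∀ i ∈ Finset.Icc 1 M, ConvexOn ℝ Set.univ (h i))
    (hh_grad : ∀ i ∈ Finset.Icc 1 M, ∀ x : H, HasGradientAt (h i) (h' i x) x)
    (hL_pos : ∀ i ∈ Finset.Icc 1 M, 0 < L i)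
    (hh_lip : ∀ i ∈ Finset.Icc 1 M, ∀ x y : H, ‖h' i x - h' i y‖ ≤ (1 / L i) * ‖x - y‖)
    (hT_firm : ∀ i ∈ Finset.Icc 1 M, ∀ x y : H,
      ‖T i x - T i y‖ ^ 2 ≤ @inner ℝ H _ (T i x - T i y) (x - y))
    (S : Set H) (hS : S = ⋂ i ∈ Finset.Icc 1 M, {x : H | T i x = x}) (hS_ne : S.Nonempty)
    (θ lam β α : ℕ → ℝ) (σ : ℝ) (hσ : 1 ≤ σ)
    (hθ_range : ∀ n, 0 ≤ θ n ∧ θ n < 1)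
    (hlam_pos : ∀ n, 0 < lam n)
    (hlam_le : ∀ n, ∀ i ∈ Finset.Icc 1 M, lam n ≤ 2 * L i)
    (hβ_range : ∀ n, 0 < β n ∧ β n ≤ 1)
    (hα_range : ∀ n, 0 < α n ∧ α n ≤ 1)
    (hθ_anti : Antitone θ) (hlam_anti : Antitone lam)
    (hβ_anti : Antitone β) (hα_anti : Antitone α)
    (hθ_lim : Tendsto θ atTop (𝓝 0)) (hlam_lim : Tendsto lam atTop (𝓝 0))
    (hβ_lim : Tendsto β atTop (𝓝 0)) (hα_lim : Tendsto α atTop (𝓝 0))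
    (hC1 : ¬ Summable α)
    (hC2 : Tendsto (fun n => (1 / α (n+1)) * |1 / lam (n+1) - 1 / lam n|) atTop (𝓝 0))
    (hC3 : Tendsto (fun n => (1 / lam (n+1)) * |1 - α n / α (n+1)|) atTop (𝓝 0))
    (hC4 : Tendsto (fun n => α n / lam n) atTop (𝓝 0))
    (hC5 : Tendsto (fun n => θ n / (α (n+1) * lam (n+1))) atTop (𝓝 0))
    (hC6 : ∀ n, lam n / lam (n+1) ≤ σ)
    (hC7 : Tendsto (fun n => β n / α (n+1)) atTop (𝓝 0))
    (x : ℕ → H) (w z y d : ℕ → ℕ → H) (u : ℕ → H)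
    (hd1 : ∀ i ∈ Finset.Icc 1 M, d 1 i = -(h' i (z 0 i)))
    (hw1 : ∀ n ≥ 1, w n 1 = x n)
    (hz : ∀ n ≥ 1, ∀ i ∈ Finset.Icc 1 M, z n i = w n i + θ n • (w n i - w (n-1) i))
    (hd : ∀ n ≥ 1, ∀ i ∈ Finset.Icc 1 M, d (n+1) i = -(h' i (z n i)) + β n • d n i)
    (hy : ∀ n ≥ 1, ∀ i ∈ Finset.Icc 1 M, ∀ v : H,
      f i (y n i) + (1 / (2 * lam n)) * ‖z n i + lam n • d (n+1) i - y n i‖ ^ 2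
        ≤ f i v + (1 / (2 * lam n)) * ‖z n i + lam n • d (n+1) i - v‖ ^ 2)
    (hw : ∀ n ≥ 1, ∀ i ∈ Finset.Icc 1 M,
      w n (i+1) = α n • u i + (1 - α n) • T i (y n i))
    (hx : ∀ n ≥ 1, x (n+1) = w n (M+1))
    (hy_bdd : ∀ i ∈ Finset.Icc 1 M, ∃ C, ∀ n ≥ 1, ‖y n i‖ ≤ C)
    (ψ : H → ℝ) (hψ : ∀ v : H, ψ v = ∑ i ∈ Finset.Icc 1 M, (f i v + h i v))
    (hΩ_ne : ∃ p ∈ S, ∀ v ∈ S, ψ p ≤ ψ v)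
    (hψ_strict : StrictConvexOn ℝ Set.univ ψ)
    : ∃ p : H, (p ∈ S ∧ ∀ v ∈ S, ψ p ≤ ψ v) ∧
      ∀ i ∈ Finset.Icc 1 M, ∀ q : H,
        Tendsto (fun n => @inner ℝ H _ (w n i) q) atTop (𝓝 (@inner ℝ H _ p q)) := by
  let P : CompositeProblem H := ⟨M, hM, f, h, h', T, fun i hi => (hf_cont i hi).lowerSemicontinuous,
    hf_conv, hh_conv, hh_grad, fun i hi => ⟨_, LipschitzWith.of_dist_le' fun a b => by
      simpa only [dist_eq_norm] using hh_lip i hi a b⟩, hT_firm⟩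
  let s : StepSizes := ⟨θ, lam, β, α, hlam_pos, fun n => (hα_range n).1, fun n => (hα_range n).2,
    hlam_lim, hC1, hC2, hC3, hC4, hC5, hC7⟩
  let r : BoundedRun P s := ⟨w, z, y, d, u, hz, hd, hy, hw,
    fun n hn => (hw1 (n + 1) (by omega)).trans (hx n hn), fun i hi =>
      let ⟨C, hC⟩ := hy_bdd i hi
      .of_bound C ((eventually_ge_atTop 1).mono fun n hn => by simpa using hC n hn)⟩
  obtain rfl : ψ = P.objective := funext hψ
  subst hS
  obtain ⟨p, hp, hlim⟩ := alg1_weak_convergence_strict_convex_general r hS_ne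
    (P.solutionSet_subsingleton hψ_strict)
  exact ⟨p, hp, hlim⟩
end

section
/- The sequences {T_i(y_n^{(i)})} (i ∈ I), {x_n}, {w_n^{(i)}} (i ∈ I), {z_n} and {d_n^{(i)}} (i ∈ I) generated by Algorithm 2 are all bounded. -/
open Filter Topology

/-! Boundedness propagates from `y` through the updates: to the `T i (y n i)`, to the `w n i` and
their weighted sums `x`, and to the extrapolated points `z`. The directions satisfy
`d (n + 1) = g n + β n • d n` with `g n = -∇h (z n)` bounded, say by `C`, and `‖β n‖` eventually at
most some `r < 1`, so from some index `N` on `‖d n‖` cannot exceed the larger of `‖d N‖` and the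
fixed point `C / (1 - r)` of `t ↦ C + r * t`. -/

open Asymptotics Bornology

section BoundedSequences

variable {E F 𝕜 ι : Type*} [SeminormedAddCommGroup E] [SeminormedAddCommGroup F] {l : Filter ι}

theorem isBigO_one_iff_exists_eventually_norm_le {a : ι → E} :
    a =O[l] (1 : ι → ℝ) ↔ ∃ C, ∀ᶠ n in l, ‖a n‖ ≤ C :=
  isBigO_one_iff ℝ

theorem isBigO_one_atTop_iff_exists_forall_ge (k : ℕ) {a : ℕ → E} :
    a =O[atTop] (1 : ℕ → ℝ) ↔ ∃ C, ∀ n ≥ k, ‖a n‖ ≤ C := by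
  constructor
  · intro ha
    obtain ⟨C, hC⟩ := ((isBigO_one_iff ℝ).mp ha).bddAbove_range
    exact ⟨C, fun n _ ↦ hC (Set.mem_range_self n)⟩
  · rintro ⟨C, hC⟩
    exact isBigO_one_iff_exists_eventually_norm_le.mpr ⟨C, eventually_atTop.mpr ⟨k, hC⟩⟩

theorem isBigO_one_smul [NormedField 𝕜] [NormedSpace 𝕜 E] {c : ι → 𝕜} {a : ι → E}
    (hc : c =O[l] (1 : ι → ℝ)) (ha : a =O[l] (1 : ι → ℝ)) :
    (fun n ↦ c n • a n) =O[l] (1 : ι → ℝ) :=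
  (hc.smul ha).congr_right fun _ ↦ one_smul ℝ 1

theorem isBigO_one_comp_of_isBounded_image {g : E → F} {a : ι → E}
    (hg : ∀ B : Set E, IsBounded B → IsBounded (g '' B)) (ha : a =O[l] (1 : ι → ℝ)) :
    (fun n ↦ g (a n)) =O[l] (1 : ι → ℝ) := by
  obtain ⟨C, hC⟩ := isBigO_one_iff_exists_eventually_norm_le.mp ha
  obtain ⟨K, hK⟩ :=
    isBounded_iff_forall_norm_le.mp (hg (Metric.closedBall 0 C) Metric.isBounded_closedBall)
  exact isBigO_one_iff_exists_eventually_norm_le.mpr ⟨K, hC.mono fun n hn ↦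
    hK _ (Set.mem_image_of_mem g (mem_closedBall_zero_iff.mpr hn))⟩

theorem isBoundedUnder_le_of_succ_le_add_mul {a : ℕ → ℝ} {C r : ℝ} (hr₀ : 0 ≤ r) (hr₁ : r < 1)
    (ha : ∀ᶠ n in atTop, a (n + 1) ≤ C + r * a n) : IsBoundedUnder (· ≤ ·) atTop a := by
  obtain ⟨N, hN⟩ := eventually_atTop.mp ha
  set R := max (a N) (C / (1 - r))
  have invariant : C + r * R ≤ R := by
    have : C ≤ R * (1 - r) := (div_le_iff₀ (sub_pos.mpr hr₁)).mp (le_max_right _ _)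
    linarith
  refine isBoundedUnder_of_eventually_le (a := R) (eventually_atTop.mpr ⟨N, fun n hn ↦ ?_⟩)
  induction n, hn using Nat.le_induction with
  | base => exact le_max_left _ _
  | succ n hn ih =>
    calc a (n + 1) ≤ C + r * a n := hN n hn
      _ ≤ C + r * R := by gcongr
      _ ≤ R := invariant

theorem isBigO_one_of_succ_eq_add_smul [NormedField 𝕜] [NormedSpace 𝕜 E] {a g : ℕ → E}
    {b : ℕ → 𝕜} {r : ℝ} (hr : r < 1) (hb : ∀ᶠ n in atTop, ‖b n‖ ≤ r)
    (hg : g =O[atTop] (1 : ℕ → ℝ))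
    (ha : ∀ᶠ n in atTop, a (n + 1) = g n + b n • a n) :
    a =O[atTop] (1 : ℕ → ℝ) := by
  obtain ⟨C, hC⟩ := isBigO_one_iff_exists_eventually_norm_le.mp hg
  obtain ⟨m, hm⟩ := hb.exists
  refine (isBigO_one_iff ℝ).mpr
    (isBoundedUnder_le_of_succ_le_add_mul ((norm_nonneg _).trans hm) hr (C := C) ?_)
  filter_upwards [hb, hC, ha] with n hbn hgn han
  calc ‖a (n + 1)‖ ≤ ‖g n‖ + ‖b n‖ * ‖a n‖ := by
        rw [han, ← norm_smul]
        exact norm_add_le _ _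
    _ ≤ C + r * ‖a n‖ := by
        gcongr

end BoundedSequences

theorem lipschitzWith_one_of_norm_sq_le_inner {H : Type*} [SeminormedAddCommGroup H]
    [InnerProductSpace ℝ H] {T : H → H}
    (hT : ∀ x y, ‖T x - T y‖ ^ 2 ≤ inner ℝ (T x - T y) (x - y)) : LipschitzWith 1 T := by
  refine LipschitzWith.mk_one fun x y ↦ ?_
  rw [dist_eq_norm, dist_eq_norm]
  have cauchySchwarz : ‖T x - T y‖ * ‖T x - T y‖ ≤ ‖T x - T y‖ * ‖x - y‖ :=
    (sq ‖T x - T y‖).symm.trans_le ((hT x y).trans (real_inner_le_norm _ _))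
  rcases (norm_nonneg (T x - T y)).eq_or_lt with hzero | hpos
  · exact hzero ▸ norm_nonneg _
  · exact le_of_mul_le_mul_left cauchySchwarz hpos

theorem alg2_sequences_bounded_general
    {H ι : Type*} [SeminormedAddCommGroup H] [NormedSpace ℝ H] (s : Finset ι)
    (ω : ι → ℝ) (h' T : ι → H → H)
    (hh' : ∀ i ∈ s, ∀ B : Set H, IsBounded B → IsBounded (h' i '' B))
    (hT : ∀ i ∈ s, ∀ B : Set H, IsBounded B → IsBounded (T i '' B))
    (θ β α : ℕ → ℝ) (r : ℝ) (hr : r < 1)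
    (hθ : θ =O[atTop] (1 : ℕ → ℝ)) (hα : α =O[atTop] (1 : ℕ → ℝ))
    (hβ : ∀ᶠ n in atTop, ‖β n‖ ≤ r)
    (x z : ℕ → H) (w y d : ℕ → ι → H) (u : ι → H)
    (hz : ∀ n ≥ 1, z n = x n + θ n • (x n - x (n - 1)))
    (hd : ∀ n ≥ 1, ∀ i ∈ s, d (n + 1) i = -(h' i (z n)) + β n • d n i)
    (hw : ∀ n ≥ 1, ∀ i ∈ s, w n i = α n • u i + (1 - α n) • T i (y n i))
    (hx : ∀ n ≥ 1, x (n + 1) = ∑ i ∈ s, ω i • w n i)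
    (hy : ∀ i ∈ s, (fun n ↦ y n i) =O[atTop] (1 : ℕ → ℝ)) :
    (∀ i ∈ s, (fun n ↦ T i (y n i)) =O[atTop] (1 : ℕ → ℝ)) ∧
      x =O[atTop] (1 : ℕ → ℝ) ∧
      (∀ i ∈ s, (fun n ↦ w n i) =O[atTop] (1 : ℕ → ℝ)) ∧
      z =O[atTop] (1 : ℕ → ℝ) ∧
      (∀ i ∈ s, (fun n ↦ d n i) =O[atTop] (1 : ℕ → ℝ)) := by
  have hconst (v : H) : (fun _ ↦ v) =O[atTop] (1 : ℕ → ℝ) := isBigO_const_one ℝ v atTop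
  have hone_sub : (fun n ↦ 1 - α n) =O[atTop] (1 : ℕ → ℝ) :=
    (isBigO_const_one ℝ (1 : ℝ) atTop).sub hα
  have hT_bdd i (hi : i ∈ s) := isBigO_one_comp_of_isBounded_image (hT i hi) (hy i hi)
  have hw_bdd : ∀ i ∈ s, (fun n ↦ w n i) =O[atTop] (1 : ℕ → ℝ) := fun i hi ↦
    ((isBigO_one_smul hα (hconst (u i))).add (isBigO_one_smul hone_sub (hT_bdd i hi))).congr'
      ((eventually_ge_atTop 1).mono fun n hn ↦ (hw n hn i hi).symm) .rfl
  have hx_bdd : x =O[atTop] (1 : ℕ → ℝ) := by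
    rw [← map_add_atTop_eq_nat 1, isBigO_map]
    exact (IsBigO.fun_sum fun i hi ↦ (hw_bdd i hi).const_smul_left (ω i)).congr'
      ((eventually_ge_atTop 1).mono fun n hn ↦ (hx n hn).symm) .rfl
  have hx_pred : (fun n ↦ x (n - 1)) =O[atTop] (1 : ℕ → ℝ) :=
    hx_bdd.comp_tendsto (tendsto_sub_atTop_nat 1)
  have hz_bdd : z =O[atTop] (1 : ℕ → ℝ) :=
    (hx_bdd.add (isBigO_one_smul hθ (hx_bdd.sub hx_pred))).congr'
      ((eventually_ge_atTop 1).mono fun n hn ↦ (hz n hn).symm) .rfl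
  refine ⟨hT_bdd, hx_bdd, hw_bdd, hz_bdd, fun i hi ↦ ?_⟩
  exact isBigO_one_of_succ_eq_add_smul hr hβ
    (isBigO_one_comp_of_isBounded_image (hh' i hi) hz_bdd).neg_left
    ((eventually_ge_atTop 1).mono fun n hn ↦ hd n hn i hi)

theorem alg2_sequences_bounded
    {H : Type*} [NormedAddCommGroup H] [InnerProductSpace ℝ H] [CompleteSpace H]
    (M : ℕ) (hM : 1 ≤ M)
    (f h : ℕ → H → ℝ) (h' : ℕ → H → H) (L : ℕ → ℝ) (T : ℕ → H → H)
    (hf_cont : ∀ i ∈ Finset.Icc 1 M, Continuous (f i))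
    (hf_conv : ∀ i ∈ Finset.Icc 1 M, ConvexOn ℝ Set.univ (f i))
    (hh_conv : ∀ i ∈ Finset.Icc 1 M, ConvexOn ℝ Set.univ (h i))
    (hh_grad : ∀ i ∈ Finset.Icc 1 M, ∀ x : H, HasGradientAt (h i) (h' i x) x)
    (hL_pos : ∀ i ∈ Finset.Icc 1 M, 0 < L i)
    (hh_lip : ∀ i ∈ Finset.Icc 1 M, ∀ x y : H, ‖h' i x - h' i y‖ ≤ (1 / L i) * ‖x - y‖)
    (hT_firm : ∀ i ∈ Finset.Icc 1 M, ∀ x y : H,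
      ‖T i x - T i y‖ ^ 2 ≤ @inner ℝ H _ (T i x - T i y) (x - y))
    (S : Set H) (hS : S = ⋂ i ∈ Finset.Icc 1 M, {x : H | T i x = x}) (hS_ne : S.Nonempty)
    (θ lam β α : ℕ → ℝ) (σ : ℝ) (hσ : 1 ≤ σ)
    (hθ_range : ∀ n, 0 ≤ θ n ∧ θ n < 1)
    (hlam_pos : ∀ n, 0 < lam n)
    (hlam_le : ∀ n, ∀ i ∈ Finset.Icc 1 M, lam n ≤ 2 * L i)
    (hβ_range : ∀ n, 0 < β n ∧ β n ≤ 1)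
    (hα_range : ∀ n, 0 < α n ∧ α n ≤ 1)
    (hθ_anti : Antitone θ) (hlam_anti : Antitone lam)
    (hβ_anti : Antitone β) (hα_anti : Antitone α)
    (hθ_lim : Tendsto θ atTop (𝓝 0)) (hlam_lim : Tendsto lam atTop (𝓝 0))
    (hβ_lim : Tendsto β atTop (𝓝 0)) (hα_lim : Tendsto α atTop (𝓝 0))
    (hC1 : ¬ Summable α)
    (hC2 : Tendsto (fun n => (1 / α (n+1)) * |1 / lam (n+1) - 1 / lam n|) atTop (𝓝 0))
    (hC3 : Tendsto (fun n => (1 / lam (n+1)) * |1 - α n / α (n+1)|) atTop (𝓝 0))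
    (hC4 : Tendsto (fun n => α n / lam n) atTop (𝓝 0))
    (hC5 : Tendsto (fun n => θ n / (α (n+1) * lam (n+1))) atTop (𝓝 0))
    (hC6 : ∀ n, lam n / lam (n+1) ≤ σ)
    (hC7 : Tendsto (fun n => β n / α (n+1)) atTop (𝓝 0))
    (x z : ℕ → H) (w y d : ℕ → ℕ → H) (u : ℕ → H)
    (hd1 : ∀ i ∈ Finset.Icc 1 M, d 1 i = -(h' i (z 0)))
    (hz : ∀ n ≥ 1, z n = x n + θ n • (x n - x (n-1)))
    (hd : ∀ n ≥ 1, ∀ i ∈ Finset.Icc 1 M, d (n+1) i = -(h' i (z n)) + β n • d n i)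
    (hy : ∀ n ≥ 1, ∀ i ∈ Finset.Icc 1 M, ∀ v : H,
      f i (y n i) + (1 / (2 * lam n)) * ‖z n + lam n • d (n+1) i - y n i‖ ^ 2
        ≤ f i v + (1 / (2 * lam n)) * ‖z n + lam n • d (n+1) i - v‖ ^ 2)
    (hw : ∀ n ≥ 1, ∀ i ∈ Finset.Icc 1 M,
      w n (i+1) = α n • u i + (1 - α n) • T i (y n i))
    (hx : ∀ n ≥ 1, x (n+1) = (M : ℝ)⁻¹ • ∑ i ∈ Finset.Icc 1 M, w n (i+1))
    (hy_bdd : ∀ i ∈ Finset.Icc 1 M, ∃ C, ∀ n ≥ 1, ‖y n i‖ ≤ C)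
    : (∀ i ∈ Finset.Icc 1 M, ∃ C, ∀ n ≥ 1, ‖T i (y n i)‖ ≤ C) ∧
      (∃ C, ∀ n ≥ 1, ‖x n‖ ≤ C) ∧
      (∀ i ∈ Finset.Icc 1 M, ∃ C, ∀ n ≥ 1, ‖w n (i+1)‖ ≤ C) ∧
      (∃ C, ∀ n ≥ 1, ‖z n‖ ≤ C) ∧
      (∀ i ∈ Finset.Icc 1 M, ∃ C, ∀ n ≥ 1, ‖d n i‖ ≤ C) := by
  simp only [← isBigO_one_atTop_iff_exists_forall_ge] at hy_bdd ⊢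
  refine alg2_sequences_bounded_general (Finset.Icc 1 M) (fun _ ↦ (M : ℝ)⁻¹) h' T ?_ ?_ θ β α
    (1 / 2) one_half_lt_one (hθ_lim.isBigO_one ℝ) (hα_lim.isBigO_one ℝ) ?_ x z
    (fun n i ↦ w n (i + 1)) y d u hz hd hw ?_ hy_bdd
  · exact fun i hi _ hB ↦ (LipschitzWith.of_dist_le' (K := 1 / L i) fun a b ↦ by
      simpa only [dist_eq_norm] using hh_lip i hi a b).isBounded_image hB
  · exact fun i hi _ hB ↦
      (lipschitzWith_one_of_norm_sq_le_inner (hT_firm i hi)).isBounded_image hB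
  · exact hβ_lim.norm.eventually_le_const (by norm_num)
  · exact fun n hn ↦ (hx n hn).trans Finset.smul_sum
end

section
/- For every x̄ ∈ S and every i ∈ I, there exist constants D₁ ≥ 0 and D₂ ≥ 0 such that for all n ≥ 1, ‖w_n^{(i+1)} − x̄‖² ≤ ‖x_n − x̄‖² + θ_n·D₁ + 2λ_n·(f_i(x̄) − f_i(y_n^{(i)})) + 2λ_n·⟨d_{n+1}^{(i)}, y_n^{(i)} − x̄⟩ + α_n·D₂ − (1 − α_n)·‖T_i(y_n^{(i)}) − y_n^{(i)}‖² − ‖z_n − y_n^{(i)}‖², where the sequences are generated by Algorithm 2. -/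
open Filter Topology

/-!
The objective `f u + ‖v - u‖ ^ 2 / (2 * c)` of a proximal step is `1 / c`-strongly convex, so it
grows quadratically away from its minimizer. Taking `v = z + c • d` and comparing with the reference
point `q` gives `2 * c * (f q - f p) + 2 * c * ⟪d, p - q⟫` and the term `-‖z - p‖ ^ 2`. The inertial
and anchoring steps are convex combinations, along which `‖· - q‖ ^ 2` is convex; they produce the
errors of order `θ` and `α`. Only the constant of the `θ`-error needs the iterates to be bounded:
from `x 2` on they lie in the convex hull of the finitely many bounded sequences produced by the
anchoring steps.
-/

open InnerProductSpace Bornology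

section NormedSpace

variable {E : Type*} [SeminormedAddCommGroup E] [NormedSpace ℝ E]

theorem convexOn_univ_norm_sub_sq (q : E) : ConvexOn ℝ Set.univ fun x : E ↦ ‖x - q‖ ^ 2 := by
  simpa only [dist_eq_norm] using! (convexOn_univ_dist q).pow (fun _ _ ↦ dist_nonneg) 2

theorem norm_add_smul_sub_sq_le {t : ℝ} (ht0 : 0 ≤ t) (ht1 : t ≤ 1) (x v q : E) :
    ‖x + t • v - q‖ ^ 2 ≤ ‖x - q‖ ^ 2 + t * ‖x + v - q‖ ^ 2 := by
  have hcomb : x + t • v = (1 - t) • x + t • (x + v) := by module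
  have hconv := (convexOn_univ_norm_sub_sq q).2 (Set.mem_univ x) (Set.mem_univ (x + v))
    (sub_nonneg.2 ht1) ht0 (sub_add_cancel 1 t)
  rw [← hcomb, smul_eq_mul, smul_eq_mul] at hconv
  linarith [mul_nonneg ht0 (sq_nonneg ‖x - q‖)]

theorem isBounded_range_of_mem_convexHull {ι : Type*} {s : Finset ι} {x : ℕ → E}
    {w : ℕ → ι → E}
    (hx : ∀ n ≥ 1, x (n + 1) ∈ convexHull ℝ (w n '' s))
    (hw : ∀ i ∈ s, IsBounded ((w · i) '' Set.Ici 1)) : IsBounded (Set.range x) := by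
  have hhull : IsBounded (convexHull ℝ (⋃ i ∈ s, (w · i) '' Set.Ici 1)) :=
    isBounded_convexHull.2 ((isBounded_biUnion_finset s).2 hw)
  refine ((Set.toFinite {x 0, x 1}).isBounded.union hhull).subset ?_
  rintro _ ⟨_ | _ | n, rfl⟩
  · exact Or.inl (Or.inl rfl)
  · exact Or.inl (Or.inr rfl)
  · refine Or.inr (convexHull_mono ?_ (hx (n + 1) n.succ_pos))
    rintro _ ⟨i, hi, rfl⟩
    exact Set.mem_biUnion hi ⟨n + 1, n.succ_pos, rfl⟩

end NormedSpace

theorem inv_card_smul_sum_mem_convexHull {ι E : Type*} [AddCommGroup E] [Module ℝ E]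
    {s : Finset ι} (hs : s.Nonempty) (z : ι → E) :
    (s.card : ℝ)⁻¹ • ∑ i ∈ s, z i ∈ convexHull ℝ (z '' s) := by
  have hmem := s.centerMass_mem_convexHull (R := ℝ) (w := fun _ ↦ 1) (z := z)
    (fun _ _ ↦ zero_le_one) (by simpa using hs) (fun _ hi ↦ Set.mem_image_of_mem z hi)
  simpa [Finset.centerMass] using hmem

theorem add_le_of_uniformConvexOn_of_isMinOn {E : Type*} [NormedAddCommGroup E]
    [NormedSpace ℝ E] {s : Set E} {φ : ℝ → ℝ} {g : E → ℝ} {p q : E}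
    (hg : UniformConvexOn s φ g) (hmin : IsMinOn g s p) (hp : p ∈ s) (hq : q ∈ s) :
    g p + φ ‖p - q‖ ≤ g q := by
  have hseg : ∀ t ∈ Set.Ioc (0 : ℝ) 1, g p + (1 - t) * φ ‖p - q‖ ≤ g q := by
    rintro t ⟨ht0, ht1⟩
    have hle := hmin (hg.1 hp hq (sub_nonneg.2 ht1) ht0.le (sub_add_cancel 1 t))
    have hconv := hg.2 hp hq (sub_nonneg.2 ht1) ht0.le (sub_add_cancel 1 t)
    simp only [Set.mem_ofPred_eq, smul_eq_mul] at hle hconv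
    exact le_of_mul_le_mul_left (by linarith) ht0
  have hlim : Tendsto (fun t : ℝ ↦ g p + (1 - t) * φ ‖p - q‖) (𝓝[>] 0)
      (𝓝 (g p + (1 - 0) * φ ‖p - q‖)) :=
    Continuous.tendsto (by fun_prop) 0 |>.mono_left nhdsWithin_le_nhds
  simpa using le_of_tendsto hlim (mem_of_superset (Ioc_mem_nhdsGT one_pos) hseg)

section InnerProductSpace

variable {H : Type*} [NormedAddCommGroup H] [InnerProductSpace ℝ H]

/-- The function minimized by the proximal operator `prox_{c f}` at `v`. A point `p` is the value of
`prox_{c f}` at `v` when `IsMinOn (proxObjective f c v) s p`, where `s` is the effective domain of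
`f`. -/
noncomputable def proxObjective (f : H → ℝ) (c : ℝ) (v u : H) : ℝ :=
  f u + 1 / (2 * c) * ‖v - u‖ ^ 2

theorem strongConvexOn_proxObjective {s : Set H} {f : H → ℝ} (hf : ConvexOn ℝ s f) (c : ℝ)
    (v : H) : StrongConvexOn s (1 / c) (proxObjective f c v) := by
  have hlin : ConvexOn ℝ s ((-(1 / c)) • innerₛₗ ℝ v) := LinearMap.convexOn _ hf.1
  refine strongConvexOn_iff_convex.2
    (((hf.add hlin).add_const (1 / (2 * c) * ‖v‖ ^ 2)).congr fun u _ ↦ ?_)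
  simp only [proxObjective, Pi.add_apply, LinearMap.smul_apply, innerₛₗ_apply_apply, smul_eq_mul,
    norm_sub_sq_real]
  ring

theorem norm_sub_sq_le_of_isMinOn_proxObjective {s : Set H} {f : H → ℝ} {c : ℝ} {z d p q : H}
    (hf : ConvexOn ℝ s f) (hc : 0 < c) (hmin : IsMinOn (proxObjective f c (z + c • d)) s p)
    (hp : p ∈ s) (hq : q ∈ s) :
    ‖p - q‖ ^ 2 ≤ ‖z - q‖ ^ 2 - ‖z - p‖ ^ 2 + 2 * c * (f q - f p) + 2 * c * ⟪d, p - q⟫_ℝ := by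
  have hgrowth := add_le_of_uniformConvexOn_of_isMinOn (strongConvexOn_proxObjective hf c _)
    hmin hp hq
  have hthree : ‖p - q‖ ^ 2 ≤
      ‖z + c • d - q‖ ^ 2 - ‖z + c • d - p‖ ^ 2 + 2 * c * (f q - f p) := by
    simp only [proxObjective] at hgrowth
    field_simp at hgrowth
    linarith
  have hexpand (a : H) : ‖z + c • d - a‖ ^ 2 =
      ‖z - a‖ ^ 2 + 2 * c * ⟪d, z - a⟫_ℝ + ‖c • d‖ ^ 2 := by
    rw [add_sub_right_comm, norm_add_sq_real, inner_smul_right, real_inner_comm]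
    ring
  have hinner : ⟪d, p - q⟫_ℝ = ⟪d, z - q⟫_ℝ - ⟪d, z - p⟫_ℝ := by
    rw [← inner_sub_right, sub_sub_sub_cancel_left]
  rw [hexpand q, hexpand p] at hthree
  rw [hinner]
  linarith

/-- `T` satisfies the inequality of firm nonexpansiveness against the single point `q`, which is
then a fixed point of `T`. Firmly nonexpansive maps have this property at each of their fixed
points, and so do subgradient projections, which need not be nonexpansive. -/
def FirmlyQuasinonexpansiveAt (T : H → H) (q : H) : Prop :=
  ∀ x, ‖T x - q‖ ^ 2 ≤ ⟪T x - q, x - q⟫_ℝ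

namespace FirmlyQuasinonexpansiveAt

variable {T : H → H} {q : H}

theorem norm_sub_sq_add_norm_sub_sq_le (hT : FirmlyQuasinonexpansiveAt T q) (x : H) :
    ‖T x - q‖ ^ 2 + ‖T x - x‖ ^ 2 ≤ ‖x - q‖ ^ 2 := by
  have hexpand := norm_sub_sq_real (T x - q) (x - q)
  rw [sub_sub_sub_cancel_right] at hexpand
  linarith [hT x]

theorem norm_anchor_sub_sq_le (hT : FirmlyQuasinonexpansiveAt T q) {a : ℝ} (ha0 : 0 ≤ a)
    (ha1 : a ≤ 1) (u y : H) :
    ‖a • u + (1 - a) • T y - q‖ ^ 2 ≤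
      ‖y - q‖ ^ 2 + a * ‖u - q‖ ^ 2 - (1 - a) * ‖T y - y‖ ^ 2 := by
  have ha : 0 ≤ 1 - a := sub_nonneg.2 ha1
  calc ‖a • u + (1 - a) • T y - q‖ ^ 2
      ≤ a * ‖u - q‖ ^ 2 + (1 - a) * ‖T y - q‖ ^ 2 :=
        (convexOn_univ_norm_sub_sq q).2 (Set.mem_univ u) (Set.mem_univ (T y)) ha0 ha
          (add_sub_cancel a 1)
    _ ≤ a * ‖u - q‖ ^ 2 + (1 - a) * (‖y - q‖ ^ 2 - ‖T y - y‖ ^ 2) := by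
        gcongr
        exact le_sub_iff_add_le.2 (hT.norm_sub_sq_add_norm_sub_sq_le y)
    _ ≤ ‖y - q‖ ^ 2 + a * ‖u - q‖ ^ 2 - (1 - a) * ‖T y - y‖ ^ 2 := by
        linarith [mul_nonneg ha0 (sq_nonneg ‖y - q‖)]

theorem isBounded_image_anchor {ι : Type*} (hT : FirmlyQuasinonexpansiveAt T q) {N : Set ι}
    {a : ι → ℝ} (ha : ∀ n ∈ N, 0 ≤ a n ∧ a n ≤ 1) (u : H) {y : ι → H} (hy : IsBounded (y '' N)) :
    IsBounded ((fun n ↦ a n • u + (1 - a n) • T (y n)) '' N) := by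
  obtain ⟨C, hC⟩ := hy.subset_closedBall q
  refine (Metric.isBounded_closedBall (x := q) (r := max ‖u - q‖ C)).subset ?_
  rintro _ ⟨n, hn, rfl⟩
  have hyC : ‖y n - q‖ ≤ C := mem_closedBall_iff_norm.1 (hC ⟨n, hn, rfl⟩)
  have hTy : ‖T (y n) - q‖ ≤ ‖y n - q‖ := le_of_sq_le_sq
    (le_of_add_le_of_nonneg_left (hT.norm_sub_sq_add_norm_sub_sq_le (y n)) (sq_nonneg _))
    (norm_nonneg _)
  exact convex_closedBall q _ (mem_closedBall_iff_norm.2 (le_max_left _ _))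
    (mem_closedBall_iff_norm.2 ((hTy.trans hyC).trans (le_max_right _ _)))
    (ha n hn).1 (sub_nonneg.2 (ha n hn).2) (add_sub_cancel _ _)

end FirmlyQuasinonexpansiveAt

theorem alg2_key_inequality_general {ι : Type*} {s : Finset ι} {K : ι → Set H} {f : ι → H → ℝ}
    {T : ι → H → H} {θ lam α : ℕ → ℝ} {x z : ℕ → H} {w y d : ℕ → ι → H} {u : ι → H} {q : H}
    (hf : ∀ i ∈ s, ConvexOn ℝ (K i) (f i))
    (hqK : ∀ i ∈ s, q ∈ K i)
    (hT : ∀ i ∈ s, FirmlyQuasinonexpansiveAt (T i) q)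
    (hθ : ∀ n ≥ 1, 0 ≤ θ n ∧ θ n ≤ 1)
    (hlam : ∀ n ≥ 1, 0 < lam n)
    (hα : ∀ n ≥ 1, 0 ≤ α n ∧ α n ≤ 1)
    (hz : ∀ n ≥ 1, z n = x n + θ n • (x n - x (n - 1)))
    (hyK : ∀ n ≥ 1, ∀ i ∈ s, y n i ∈ K i)
    (hy : ∀ n ≥ 1, ∀ i ∈ s,
      IsMinOn (proxObjective (f i) (lam n) (z n + lam n • d n i)) (K i) (y n i))
    (hw : ∀ n ≥ 1, ∀ i ∈ s, w n i = α n • u i + (1 - α n) • T i (y n i))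
    (hx : ∀ n ≥ 1, x (n + 1) ∈ convexHull ℝ (w n '' s))
    (hy_bdd : ∀ i ∈ s, IsBounded ((y · i) '' Set.Ici 1)) :
    ∀ i ∈ s, ∃ D₁ ≥ (0 : ℝ), ∃ D₂ ≥ (0 : ℝ), ∀ n ≥ 1,
      ‖w n i - q‖ ^ 2 ≤ ‖x n - q‖ ^ 2 + θ n * D₁ + 2 * lam n * (f i q - f i (y n i))
        + 2 * lam n * ⟪d n i, y n i - q⟫_ℝ + α n * D₂
        - (1 - α n) * ‖T i (y n i) - y n i‖ ^ 2 - ‖z n - y n i‖ ^ 2 := by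
  have hw_bdd : ∀ i ∈ s, IsBounded ((w · i) '' Set.Ici 1) := fun i hi ↦ by
    rw [Set.image_congr (s := Set.Ici 1) fun n hn ↦ hw n hn i hi]
    exact (hT i hi).isBounded_image_anchor hα (u i) (hy_bdd i hi)
  obtain ⟨R, hR⟩ := isBounded_iff_forall_norm_le.1 (isBounded_range_of_mem_convexHull hx hw_bdd)
  have hextrapolated (n : ℕ) : ‖x n + (x n - x (n - 1)) - q‖ ≤ R + (R + R) + ‖q‖ :=
    norm_sub_le_of_le (norm_add_le_of_le (hR _ ⟨n, rfl⟩)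
      (norm_sub_le_of_le (hR _ ⟨n, rfl⟩) (hR _ ⟨n - 1, rfl⟩))) le_rfl
  refine fun i hi ↦ ⟨(R + (R + R) + ‖q‖) ^ 2, sq_nonneg _, ‖u i - q‖ ^ 2, sq_nonneg _,
    fun n hn ↦ ?_⟩
  have hanchor := (hT i hi).norm_anchor_sub_sq_le (hα n hn).1 (hα n hn).2 (u i) (y n i)
  have hprox := norm_sub_sq_le_of_isMinOn_proxObjective (hf i hi) (hlam n hn) (hy n hn i hi)
    (hyK n hn i hi) (hqK i hi)
  have hinertial := norm_add_smul_sub_sq_le (hθ n hn).1 (hθ n hn).2 (x n) (x n - x (n - 1)) q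
  have hextrapolated_sq := mul_le_mul_of_nonneg_left
    (pow_le_pow_left₀ (norm_nonneg _) (hextrapolated n) 2) (hθ n hn).1
  rw [← hw n hn i hi] at hanchor
  rw [← hz n hn] at hinertial
  linarith

end InnerProductSpace

theorem alg2_key_inequality
    {H : Type*} [NormedAddCommGroup H] [InnerProductSpace ℝ H] [CompleteSpace H]
    (M : ℕ) (hM : 1 ≤ M)
    (f h : ℕ → H → ℝ) (h' : ℕ → H → H) (L : ℕ → ℝ) (T : ℕ → H → H)
    (hf_cont : ∀ i ∈ Finset.Icc 1 M, Continuous (f i))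
    (hf_conv : ∀ i ∈ Finset.Icc 1 M, ConvexOn ℝ Set.univ (f i))
    (hh_conv : ∀ i ∈ Finset.Icc 1 M, ConvexOn ℝ Set.univ (h i))
    (hh_grad : ∀ i ∈ Finset.Icc 1 M, ∀ x : H, HasGradientAt (h i) (h' i x) x)
    (hL_pos : ∀ i ∈ Finset.Icc 1 M, 0 < L i)
    (hh_lip : ∀ i ∈ Finset.Icc 1 M, ∀ x y : H, ‖h' i x - h' i y‖ ≤ (1 / L i) * ‖x - y‖)
    (hT_firm : ∀ i ∈ Finset.Icc 1 M, ∀ x y : H,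
      ‖T i x - T i y‖ ^ 2 ≤ @inner ℝ H _ (T i x - T i y) (x - y))
    (S : Set H) (hS : S = ⋂ i ∈ Finset.Icc 1 M, {x : H | T i x = x}) (hS_ne : S.Nonempty)
    (θ lam β α : ℕ → ℝ) (σ : ℝ) (hσ : 1 ≤ σ)
    (hθ_range : ∀ n, 0 ≤ θ n ∧ θ n < 1)
    (hlam_pos : ∀ n, 0 < lam n)
    (hlam_le : ∀ n, ∀ i ∈ Finset.Icc 1 M, lam n ≤ 2 * L i)
    (hβ_range : ∀ n, 0 < β n ∧ β n ≤ 1)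
    (hα_range : ∀ n, 0 < α n ∧ α n ≤ 1)
    (hθ_anti : Antitone θ) (hlam_anti : Antitone lam)
    (hβ_anti : Antitone β) (hα_anti : Antitone α)
    (hθ_lim : Tendsto θ atTop (𝓝 0)) (hlam_lim : Tendsto lam atTop (𝓝 0))
    (hβ_lim : Tendsto β atTop (𝓝 0)) (hα_lim : Tendsto α atTop (𝓝 0))
    (hC1 : ¬ Summable α)
    (hC2 : Tendsto (fun n => (1 / α (n+1)) * |1 / lam (n+1) - 1 / lam n|) atTop (𝓝 0))
    (hC3 : Tendsto (fun n => (1 / lam (n+1)) * |1 - α n / α (n+1)|) atTop (𝓝 0))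
    (hC4 : Tendsto (fun n => α n / lam n) atTop (𝓝 0))
    (hC5 : Tendsto (fun n => θ n / (α (n+1) * lam (n+1))) atTop (𝓝 0))
    (hC6 : ∀ n, lam n / lam (n+1) ≤ σ)
    (hC7 : Tendsto (fun n => β n / α (n+1)) atTop (𝓝 0))
    (x z : ℕ → H) (w y d : ℕ → ℕ → H) (u : ℕ → H)
    (hd1 : ∀ i ∈ Finset.Icc 1 M, d 1 i = -(h' i (z 0)))
    (hz : ∀ n ≥ 1, z n = x n + θ n • (x n - x (n-1)))
    (hd : ∀ n ≥ 1, ∀ i ∈ Finset.Icc 1 M, d (n+1) i = -(h' i (z n)) + β n • d n i)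
    (hy : ∀ n ≥ 1, ∀ i ∈ Finset.Icc 1 M, ∀ v : H,
      f i (y n i) + (1 / (2 * lam n)) * ‖z n + lam n • d (n+1) i - y n i‖ ^ 2
        ≤ f i v + (1 / (2 * lam n)) * ‖z n + lam n • d (n+1) i - v‖ ^ 2)
    (hw : ∀ n ≥ 1, ∀ i ∈ Finset.Icc 1 M,
      w n (i+1) = α n • u i + (1 - α n) • T i (y n i))
    (hx : ∀ n ≥ 1, x (n+1) = (M : ℝ)⁻¹ • ∑ i ∈ Finset.Icc 1 M, w n (i+1))
    (hy_bdd : ∀ i ∈ Finset.Icc 1 M, ∃ C, ∀ n ≥ 1, ‖y n i‖ ≤ C)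
    : ∀ xb ∈ S, ∀ i ∈ Finset.Icc 1 M, ∃ D₁ ≥ (0:ℝ), ∃ D₂ ≥ (0:ℝ), ∀ n ≥ 1,
      ‖w n (i+1) - xb‖ ^ 2 ≤ ‖x n - xb‖ ^ 2 + θ n * D₁
        + 2 * lam n * (f i xb - f i (y n i))
        + 2 * lam n * @inner ℝ H _ (d (n+1) i) (y n i - xb)
        + α n * D₂ - (1 - α n) * ‖T i (y n i) - y n i‖ ^ 2 - ‖z n - y n i‖ ^ 2 := by
  intro xb hxb
  have hfix : ∀ i ∈ Finset.Icc 1 M, T i xb = xb := by simpa [hS] using hxb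
  refine alg2_key_inequality_general (K := fun _ ↦ Set.univ) (w := fun n i ↦ w n (i + 1))
    (d := fun n i ↦ d (n + 1) i) hf_conv (fun _ _ ↦ Set.mem_univ xb)
    (fun i hi v ↦ by simpa only [hfix i hi] using hT_firm i hi v xb)
    (fun n _ ↦ ⟨(hθ_range n).1, (hθ_range n).2.le⟩) (fun n _ ↦ hlam_pos n)
    (fun n _ ↦ ⟨(hα_range n).1.le, (hα_range n).2⟩) hz (fun _ _ _ _ ↦ Set.mem_univ _)
    (fun n hn i hi ↦ isMinOn_univ_iff.2 (hy n hn i hi)) hw (fun n hn ↦ ?_) (fun i hi ↦ ?_)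
  · rw [hx n hn]
    simpa using inv_card_smul_sum_mem_convexHull (Finset.nonempty_Icc.2 hM) fun i ↦ w n (i + 1)
  · exact isBounded_iff_forall_norm_le.2 ((hy_bdd i hi).imp fun _ hC ↦ Set.forall_mem_image.2 hC)
end
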